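/- arXiv:1804.09791 — 4 statements merged into one kernel-verified Lean document; each statement's English description precedes it below -/
import Mathlib

section
/- Let n ≥ 12, set p = 2 ln(n)/n, and let S ⊆ ℝ be a finite nonempty set. Form a random n×n matrix M with mutually independent entries, where each entry equals a uniformly random element of S with probability p and equals 0 with probability 1 − p. Then the probability that M is invertible is at least (1 − n²/|S|)·(1 − (ln n)²/n). In particular, the p-Bernoulli code with p = 2 ln(n)/n achieves the probabilistic recovery threshold n with average computation load 2 ln(n) per worker. -/
open MeasureTheory


def cfM (n : ℕ) : ℕ := if n < 16 then 24 else if n < 20 then 27 else if n < 30 then 29 else if n < 43 then 33 else if n < 65 then 37 else 41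

def cfSum (n m : ℕ) : ℕ → ℕ
  | 0 => 0
  | k + 1 => cfSum n m k +
      (n.descFactorial (k + 1) / (k + 1).factorial) * (n.descFactorial k / k.factorial) *
        ((5 * n - m) ^ ((k + 1) * (n - k)) * (5 * n) ^ (n ^ 2 - (k + 1) * (n - k)))

lemma cf_small_check : ∀ n < 100, 12 ≤ n →
    cfSum n (cfM n) n * (100 * n) ≤ (cfM n) ^ 2 * (5 * n) ^ (n ^ 2) := by
  decide +kernel

lemma cf_exp : Real.exp (1/10) ≤ 1.1052 := by
  have h := Real.exp_bound' (x := 1/10) (by norm_num) (by norm_num) (n := 5) (by norm_num)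
  refine h.trans ?_
  norm_num [Finset.sum_range_succ, Nat.factorial]

lemma cf_log (n m : ℕ) (h : (1.1052 : ℝ) ^ m ≤ n) : (m : ℝ) / 10 ≤ Real.log n := by
  have h0 : (0 : ℝ) < n := lt_of_lt_of_le (by positivity) h
  rw [Real.le_log_iff_exp_le h0]
  refine le_trans ?_ h
  have : (m : ℝ) / 10 = m * (1 / 10) := by ring
  rw [this, Real.exp_nat_mul]
  exact pow_le_pow_left₀ (Real.exp_pos _).le cf_exp m

lemma cf_logM (n : ℕ) (hn : 12 ≤ n) : (cfM n : ℝ) / 10 ≤ Real.log n := by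
  apply cf_log
  unfold cfM
  split_ifs with h1 h2 h3 h4 h5
  · have : (12 : ℝ) ≤ n := by exact_mod_cast hn
    refine le_trans ?_ this; norm_num
  · have : (16 : ℝ) ≤ n := by exact_mod_cast (not_lt.1 h1)
    refine le_trans ?_ this; norm_num
  · have : (20 : ℝ) ≤ n := by exact_mod_cast (not_lt.1 h2)
    refine le_trans ?_ this; norm_num
  · have : (30 : ℝ) ≤ n := by exact_mod_cast (not_lt.1 h3)
    refine le_trans ?_ this; norm_num
  · have : (43 : ℝ) ≤ n := by exact_mod_cast (not_lt.1 h4)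
    refine le_trans ?_ this; norm_num
  · have : (65 : ℝ) ≤ n := by exact_mod_cast (not_lt.1 h5)
    refine le_trans ?_ this; norm_num

lemma cfSum_eq (n m : ℕ) (hm : m ≤ 5 * n) (hn : 0 < n) (k : ℕ) (hk : k ≤ n) :
    (cfSum n m k : ℝ) = (5 * n : ℝ) ^ (n ^ 2) * ∑ a ∈ Finset.range k,
      (n.choose (a + 1) : ℝ) * (n.choose a) * (1 - 2 * (m / 10 : ℝ) / n) ^ ((a + 1) * (n - a)) := by
  induction k with
  | zero => simp [cfSum]
  | succ k ih =>
    rw [cfSum, Finset.sum_range_succ, mul_add, ← ih (by omega),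
      ← Nat.choose_eq_descFactorial_div_factorial, ← Nat.choose_eq_descFactorial_div_factorial]
    push_cast [Nat.cast_sub hm]
    congr 1
    have hE : (k + 1) * (n - k) ≤ n ^ 2 := by
      rw [sq]; exact Nat.mul_le_mul (by omega) (by omega)
    have hn' : (n : ℝ) ≠ 0 := by positivity
    have h1 : (1 - 2 * (m / 10 : ℝ) / n) = (5 * n - m) / (5 * n) := by field_simp; ring
    rw [h1, div_pow]
    have h2 : (5 * n : ℝ) ^ (n ^ 2) = (5 * n : ℝ) ^ ((k + 1) * (n - k)) *
        (5 * n : ℝ) ^ (n ^ 2 - (k + 1) * (n - k)) := by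
      rw [← pow_add]; congr 1; omega
    rw [h2]
    field_simp

lemma cf_pos (n : ℕ) (hn : 12 ≤ n) : 0 ≤ 1 - 2 * Real.log n / n := by
  have h0 : (12 : ℝ) ≤ n := by exact_mod_cast hn
  have h : Real.log n ≤ n / 2 := by
    have := Real.log_le_sub_one_of_pos (x := (n : ℝ) / 2) (by linarith)
    rw [Real.log_div (by linarith) (by norm_num)] at this
    have := Real.log_two_lt_d9
    linarith
  rw [sub_nonneg, div_le_one (by linarith)]; linarith

lemma cf_small (n : ℕ) (hn : 12 ≤ n) (h100 : n < 100) :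
    ∑ a ∈ Finset.range n, (n.choose (a + 1) : ℝ) * (n.choose a) *
      (1 - 2 * Real.log n / n) ^ ((a + 1) * (n - a)) ≤ Real.log n ^ 2 / n := by
  have hl := cf_logM n hn
  have hm : cfM n ≤ 5 * n := by unfold cfM; split_ifs <;> omega
  have h := cf_small_check n h100 hn
  have h' : (cfSum n (cfM n) n : ℝ) * (100 * n) ≤ (cfM n : ℝ) ^ 2 * (5 * n) ^ (n ^ 2) := by
    exact_mod_cast h
  rw [cfSum_eq n _ hm (by omega) n le_rfl] at h'
  have hn0 : (0 : ℝ) < n := by exact_mod_cast (by omega : 0 < n)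
  have hp : (0 : ℝ) < (5 * n : ℝ) ^ (n ^ 2) := by positivity
  have h2 : ∑ a ∈ Finset.range n, (n.choose (a + 1) : ℝ) * (n.choose a) *
      (1 - 2 * (cfM n / 10 : ℝ) / n) ^ ((a + 1) * (n - a)) ≤ (cfM n / 10 : ℝ) ^ 2 / n := by
    rw [le_div_iff₀ hn0]
    have h3 := le_of_mul_le_mul_left (a := (5 * n : ℝ) ^ (n ^ 2))
      (b := (∑ a ∈ Finset.range n, (n.choose (a + 1) : ℝ) * (n.choose a) *
      (1 - 2 * (cfM n / 10 : ℝ) / n) ^ ((a + 1) * (n - a))) * (100 * n))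
      (c := (cfM n : ℝ) ^ 2) (by linarith) hp
    linarith
  refine le_trans (Finset.sum_le_sum fun a _ => ?_) (h2.trans ?_)
  · have := cf_pos n hn
    gcongr
  · gcongr

lemma cf_logdiv (n : ℕ) (hn : 100 ≤ n) : Real.log n / n ≤ 0.05 := by
  have h0 : (100 : ℝ) ≤ n := by exact_mod_cast hn
  rw [div_le_iff₀ (by linarith)]
  have h2 := Real.log_le_sub_one_of_pos (x := (n : ℝ) / 64) (by linarith)
  rw [Real.log_div (by linarith) (by norm_num)] at h2
  have h3 : Real.log 64 = 6 * Real.log 2 := by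
    rw [show (64 : ℝ) = 2 ^ 6 by norm_num, Real.log_pow]; norm_num
  have := Real.log_two_lt_d9
  linarith

lemma cf_log32 : (1.15 : ℝ) ≤ Real.log 3.2 := by
  rw [Real.le_log_iff_exp_le (by norm_num)]
  have h := Real.exp_bound' (x := 0.15) (by norm_num) (by norm_num) (n := 3) (by norm_num)
  have h2 : Real.exp 0.15 ≤ 1.163 := by
    refine h.trans ?_
    norm_num [Finset.sum_range_succ, Nat.factorial]
  have h1 := Real.exp_one_lt_d9
  have : Real.exp 1.15 = Real.exp 1 * Real.exp 0.15 := by rw [← Real.exp_add]; norm_num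
  rw [this]
  calc _ ≤ (2.7182818286 : ℝ) * 1.163 := by gcongr
    _ ≤ _ := by norm_num

lemma cf_conc (n a : ℕ) (hn : 100 ≤ n) (ha : 4 ≤ a) (ha2 : 2 * a ≤ n + 1) :
    1 + ((a : ℝ) - 1) * (Real.log n / n) ≤ Real.log (0.8 * a) := by
  have hlam := cf_logdiv n hn
  have hL : (4.5 : ℝ) ≤ Real.log n := by
    have := cf_log n 45 (by
      have : (100 : ℝ) ≤ n := by exact_mod_cast hn
      refine le_trans ?_ this; norm_num)
    norm_num at this ⊢; linarith
  have h0 : (100 : ℝ) ≤ n := by exact_mod_cast hn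
  have ha' : (4 : ℝ) ≤ a := by exact_mod_cast ha
  have ha2' : 2 * (a : ℝ) ≤ n + 1 := by exact_mod_cast ha2
  set lam := Real.log n / n with hl
  have hlL : lam * n = Real.log n := by rw [hl]; field_simp
  set b : ℝ := (n + 1) / 2 with hb
  have hb4 : 0 < b - 4 := by rw [hb]; linarith
  set t : ℝ := (a - 4) / (b - 4) with ht
  have ht0 : 0 ≤ t := div_nonneg (by linarith) hb4.le
  have ht1 : t ≤ 1 := by rw [ht, div_le_one hb4, hb]; linarith
  have hta : (a : ℝ) = (1 - t) * 4 + t * b := by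
    have : t * (b - 4) = a - 4 := by rw [ht]; field_simp
    linarith
  have hc := strictConcaveOn_log_Ioi.concaveOn.2 (x := 0.8 * 4) (y := 0.8 * b)
    (by norm_num) (by simp only [Set.mem_Ioi]; linarith) (sub_nonneg.2 ht1) ht0 (by ring)
  simp only [smul_eq_mul] at hc
  have e1 : (1 - t) * (0.8 * 4) + t * (0.8 * b) = 0.8 * a := by rw [hta]; ring
  rw [e1] at hc
  refine le_trans ?_ hc
  have hA : 1 + 3 * lam ≤ Real.log (0.8 * 4) := by
    have := cf_log32
    norm_num at this hlam ⊢; linarith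
  have hB : 1 + (b - 1) * lam ≤ Real.log (0.8 * b) := by
    have h5 : Real.log (0.4 * n) ≤ Real.log (0.8 * b) := by
      apply Real.log_le_log (by linarith); rw [hb]; linarith
    rw [Real.log_mul (by norm_num) (by linarith)] at h5
    have h6 : (-1 : ℝ) ≤ Real.log 0.4 := by
      rw [Real.le_log_iff_exp_le (by norm_num), Real.exp_neg, inv_le_comm₀ (Real.exp_pos _) (by norm_num)]
      have := Real.exp_one_gt_d9
      norm_num at this ⊢; linarith
    have h7 : 0 ≤ lam := div_nonneg (by linarith) (by linarith)
    have h8 : (b - 1) * lam ≤ Real.log n / 2 := by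
      rw [← hlL, hb]; nlinarith
    linarith
  have e2 : 1 + ((a : ℝ) - 1) * lam = (1 - t) * (1 + 3 * lam) + t * (1 + (b - 1) * lam) := by
    rw [hta]; ring
  rw [e2]
  have := sub_nonneg.2 ht1
  gcongr

lemma cf_G (n a : ℕ) (hn : 100 ≤ n) (ha : 1 ≤ a) (ha2 : 2 * a ≤ n + 1) :
    (a : ℝ) * (Real.exp (((a : ℝ) - 1) * (Real.log n / n)) ^ a / a.factorial) ^ 2
      ≤ 1.6 * (a * 0.64 ^ a) := by
  have hlam := cf_logdiv n hn
  rcases lt_or_ge a 4 with h4 | h4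
  · interval_cases a
    · norm_num
    · have : Real.exp (Real.log n / n) ≤ Real.exp 0.05 := Real.exp_le_exp.2 hlam
      have h2 := Real.exp_bound_div_one_sub_of_interval (x := 0.05) (by norm_num) (by norm_num)
      have h3 : Real.exp (Real.log n / n) ≤ 1.06 := this.trans (h2.trans (by norm_num))
      have h4 : Real.exp (Real.log n / n) ^ 4 ≤ 1.06 ^ 4 := by gcongr
      norm_num at h4 ⊢
      ring_nf at h4 ⊢
      linarith
    · have : Real.exp (2 * (Real.log n / n)) ≤ Real.exp 0.1 := Real.exp_le_exp.2 (by linarith)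
      have h2 := Real.exp_bound_div_one_sub_of_interval (x := 0.1) (by norm_num) (by norm_num)
      have h3 : Real.exp (2 * (Real.log n / n)) ≤ 1.12 := this.trans (h2.trans (by norm_num))
      have e : ((3 : ℕ) : ℝ) - 1 = 2 := by norm_num
      rw [e]
      have hy0 := (Real.exp_pos (2 * (Real.log n / n))).le
      generalize Real.exp (2 * (Real.log n / n)) = y at *
      have h4 : (y ^ 3 / (Nat.factorial 3 : ℝ)) ^ 2 = y ^ 6 / 36 := by
        norm_num [Nat.factorial]; ring
      rw [h4]
      have h5 : y ^ 6 ≤ 1.12 ^ 6 := by gcongr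
      norm_num at h5 ⊢
      linarith
  · have hc := cf_conc n a hn h4 ha2
    have ha0 : (0 : ℝ) < a := by positivity
    have h1 : Real.exp 1 * Real.exp (((a : ℝ) - 1) * (Real.log n / n)) ≤ 0.8 * a := by
      rw [← Real.exp_add]
      exact (Real.le_log_iff_exp_le (by positivity)).1 hc
    have h2 := Real.pow_div_factorial_le_exp (x := (a : ℝ)) ha0.le a
    set y := Real.exp (((a : ℝ) - 1) * (Real.log n / n)) with hy
    have hy0 : 0 < y := Real.exp_pos _
    have h3 : y ^ a / a.factorial ≤ 0.8 ^ a := by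
      have hf : (0 : ℝ) < a.factorial := by positivity
      have h4 : (Real.exp 1 * y) ^ a ≤ (0.8 * a) ^ a := by gcongr
      rw [mul_pow, mul_pow, ← Real.exp_nat_mul, mul_one] at h4
      have hE := Real.exp_pos (a : ℝ)
      have h5 : Real.exp a * (y ^ a / a.factorial) ≤ Real.exp a * 0.8 ^ a := by
        calc Real.exp a * (y ^ a / a.factorial) = (Real.exp a * y ^ a) / a.factorial := by ring
          _ ≤ (0.8 ^ a * (a : ℝ) ^ a) / a.factorial := by gcongr
          _ = 0.8 ^ a * ((a : ℝ) ^ a / a.factorial) := by ring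
          _ ≤ 0.8 ^ a * Real.exp a := by gcongr
          _ = _ := by ring
      exact le_of_mul_le_mul_left h5 hE
    have h6 : (y ^ a / a.factorial) ^ 2 ≤ 0.64 ^ a := by
      calc _ ≤ ((0.8 : ℝ) ^ a) ^ 2 := by gcongr
        _ = (0.8 ^ 2) ^ a := by rw [← pow_mul, ← pow_mul, mul_comm]
        _ = _ := by norm_num
    have h7 : (a : ℝ) * (y ^ a / a.factorial) ^ 2 ≤ a * 0.64 ^ a := by gcongr
    have : 0 ≤ (a : ℝ) * 0.64 ^ a := by positivity
    linarith

lemma cf_term (n a : ℕ) (hn : 100 ≤ n) (ha2 : 2 * (a + 1) ≤ n + 1) :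
    n * ((n.choose (a + 1) : ℝ) * (n.choose a) *
      (1 - 2 * Real.log n / n) ^ ((a + 1) * (n - a))) ≤ 1.6 * ((a + 1 : ℕ) * 0.64 ^ (a + 1)) := by
  refine le_trans ?_ (cf_G n (a + 1) hn (by omega) ha2)
  have hn0 : (0 : ℝ) < n := by exact_mod_cast (by omega : 0 < n)
  have h1 := Nat.choose_le_pow_div (α := ℝ) (a + 1) n
  have h2 := Nat.choose_le_pow_div (α := ℝ) a n
  have hp := cf_pos n (by omega)
  have h3 : 1 - 2 * Real.log n / n ≤ Real.exp (-(2 * Real.log n / n)) := by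
    have := Real.add_one_le_exp (-(2 * Real.log n / n)); linarith
  have h4 : (1 - 2 * Real.log n / n) ^ ((a + 1) * (n - a)) ≤
      Real.exp (-(2 * Real.log n / n)) ^ ((a + 1) * (n - a)) := by gcongr
  have h5 : Real.exp (-(2 * Real.log n / n)) ^ ((a + 1) * (n - a)) =
      ((n : ℝ) ^ (2 * (a + 1)))⁻¹ * (Real.exp (a * (Real.log n / n)) ^ (a + 1)) ^ 2 := by
    have : (n : ℝ) ^ (2 * (a + 1)) = Real.exp ((2 * (a + 1) : ℕ) * Real.log n) := by
      rw [Real.exp_nat_mul, Real.exp_log hn0]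
    rw [this, ← Real.exp_neg, ← Real.exp_nat_mul, ← Real.exp_nat_mul, ← Real.exp_nat_mul,
      ← Real.exp_add]
    congr 1
    push_cast [Nat.cast_sub (by omega : a ≤ n)]
    field_simp
    ring
  rw [h5] at h4
  push_cast
  rw [add_sub_cancel_right]
  set y := Real.exp (a * (Real.log n / n)) ^ (a + 1) with hy
  calc _ ≤ n * (((n : ℝ) ^ (a + 1) / (a + 1).factorial) * ((n : ℝ) ^ a / a.factorial) *
        (((n : ℝ) ^ (2 * (a + 1)))⁻¹ * y ^ 2)) := by gcongr
    _ = _ := by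
      rw [Nat.factorial_succ]
      push_cast
      have : (a.factorial : ℝ) ≠ 0 := by positivity
      have : (a : ℝ) + 1 ≠ 0 := by positivity
      field_simp
      ring

lemma cf_geom (k : ℕ) : ∑ a ∈ Finset.range k, ((a + 1 : ℕ) : ℝ) * 0.64 ^ (a + 1) =
    (0.64 - 0.64 ^ (k + 1) * (1 + k * 0.36)) / 0.1296 := by
  induction k with
  | zero => norm_num
  | succ k ih =>
    rw [Finset.sum_range_succ, ih]
    push_cast
    rw [pow_succ _ (k + 1)]
    ring

lemma cf_large (n : ℕ) (hn : 100 ≤ n) :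
    ∑ a ∈ Finset.range n, (n.choose (a + 1) : ℝ) * (n.choose a) *
      (1 - 2 * Real.log n / n) ^ ((a + 1) * (n - a)) ≤ Real.log n ^ 2 / n := by
  have hn0 : (0 : ℝ) < n := by exact_mod_cast (by omega : 0 < n)
  have hL : (4.5 : ℝ) ≤ Real.log n := by
    have := cf_log n 45 (by
      have : (100 : ℝ) ≤ n := by exact_mod_cast hn
      refine le_trans ?_ this; norm_num)
    norm_num at this ⊢; linarith
  rw [le_div_iff₀' hn0, Finset.mul_sum]
  let F : ℕ → ℝ := fun a => 1.6 * ((a + 1 : ℕ) * 0.64 ^ (a + 1))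
  have hF : ∀ a, 0 ≤ F a := fun a => by simp only [F]; positivity
  have hsum : ∑ a ∈ Finset.range n, F a ≤ 8 := by
    simp only [F]
    rw [← Finset.mul_sum, cf_geom]
    have : (0 : ℝ) ≤ 0.64 ^ (n + 1) * (1 + n * 0.36) := by positivity
    generalize (0.64 : ℝ) ^ (n + 1) * (1 + n * 0.36) = z at *
    norm_num at this ⊢
    linarith
  calc _ ≤ ∑ a ∈ Finset.range n, (F a + F (n - 1 - a)) := by
        apply Finset.sum_le_sum
        intro a ha
        rw [Finset.mem_range] at ha
        rcases le_or_gt (2 * (a + 1)) (n + 1) with h | h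
        · have := cf_term n a hn h
          have := hF (n - 1 - a)
          simp only [F] at *
          linarith
        · have h1 := cf_term n (n - 1 - a) hn (by omega)
          have e1 : n - 1 - a + 1 = n - a := by omega
          have e2 : n - (n - 1 - a) = a + 1 := by omega
          have e3 : n.choose (n - a) = n.choose a := Nat.choose_symm (by omega)
          have e4 : n.choose (n - 1 - a) = n.choose (a + 1) := by
            rw [← Nat.choose_symm (by omega : a + 1 ≤ n)]; congr 1; omega
          have h2 := hF a
          have e5 : F (n - 1 - a) = 1.6 * ((n - 1 - a + 1 : ℕ) * 0.64 ^ (n - 1 - a + 1)) := rfl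
          rw [← e5, e1, e2, e3, e4, mul_comm (n.choose a : ℝ), mul_comm (n - a)] at h1
          linarith
    _ = 2 * ∑ a ∈ Finset.range n, F a := by
        rw [Finset.sum_add_distrib, Finset.sum_range_reflect]; ring
    _ ≤ _ := by nlinarith

lemma cf_num (n : ℕ) (hn : 12 ≤ n) :
    ∑ a ∈ Finset.range n, (n.choose (a + 1) : ℝ) * (n.choose a) *
      (1 - 2 * Real.log n / n) ^ ((a + 1) * (n - a)) ≤ Real.log n ^ 2 / n := by
  rcases lt_or_ge n 100 with h | h
  · exact cf_small n hn h
  · exact cf_large n h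

/-- perfect matching or a zero block -/
lemma cf_hall (n : ℕ) (c : Fin n × Fin n → Bool) :
    (∃ σ : Equiv.Perm (Fin n), ∀ i, c (i, σ i) = true) ∨
    ∃ a < n, ∃ A ∈ Finset.powersetCard (a + 1) (Finset.univ : Finset (Fin n)),
      ∃ B ∈ Finset.powersetCard (n - a) (Finset.univ : Finset (Fin n)),
        ∀ i ∈ A, ∀ j ∈ B, c (i, j) = false := by
  classical
  let t : Fin n → Finset (Fin n) := fun i => Finset.univ.filter fun j => c (i, j) = true
  by_cases h : ∀ s : Finset (Fin n), s.card ≤ (s.biUnion t).card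
  · left
    obtain ⟨f, hf, hft⟩ := (Finset.all_card_le_biUnion_card_iff_exists_injective t).1 h
    refine ⟨Equiv.ofBijective f (Finite.injective_iff_bijective.1 hf), fun i => ?_⟩
    have := hft i
    simpa [t] using this
  · right
    push Not at h
    obtain ⟨A, hA⟩ := h
    have hAn : A.card ≤ n := by simpa using Finset.card_le_univ A
    have hc : (A.biUnion t)ᶜ.card = n - (A.biUnion t).card := by
      rw [Finset.card_compl, Fintype.card_fin]
    obtain ⟨B, hB, hBc⟩ := Finset.exists_subset_card_eq
      (s := (A.biUnion t)ᶜ) (n := n - (A.card - 1)) (by omega)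
    refine ⟨A.card - 1, by omega, A, ?_, B, ?_, ?_⟩
    · simp only [Finset.mem_powersetCard, Finset.subset_univ, true_and]; omega
    · simp [Finset.mem_powersetCard, hBc]
    · intro i hi j hj
      have := hB hj
      simp only [Finset.mem_compl, Finset.mem_biUnion, not_exists, not_and, t,
        Finset.mem_filter, Finset.mem_univ, true_and, Bool.not_eq_true] at this
      exact this i hi

noncomputable def cfPoly (n : ℕ) (c : Fin n × Fin n → Bool) : MvPolynomial (Fin n × Fin n) ℝ :=
  (Matrix.of fun i j : Fin n =>
    if c (i, j) = true then (MvPolynomial.X (i, j) : MvPolynomial (Fin n × Fin n) ℝ) else 0).det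

lemma cfPoly_eval (n : ℕ) (c : Fin n × Fin n → Bool) (x : Fin n × Fin n → ℝ) :
    MvPolynomial.eval x (cfPoly n c) =
      (Matrix.of fun i j : Fin n => if c (i, j) = true then x (i, j) else 0).det := by
  rw [cfPoly, RingHom.map_det]
  congr 1
  ext i j
  simp only [RingHom.mapMatrix_apply, Matrix.map_apply, Matrix.of_apply]
  split_ifs <;> simp

lemma cfPoly_ne (n : ℕ) (c : Fin n × Fin n → Bool) (σ : Equiv.Perm (Fin n))
    (h : ∀ i, c (i, σ i) = true) : cfPoly n c ≠ 0 := by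
  intro h0
  have h1 := cfPoly_eval n c (fun ij => if σ ij.1 = ij.2 then 1 else 0)
  rw [h0, map_zero] at h1
  have h2 : (Matrix.of fun i j : Fin n => if c (i, j) = true then
      (if σ i = j then (1 : ℝ) else 0) else 0) = σ.permMatrix ℝ := by
    ext i j
    simp only [Matrix.of_apply, Equiv.Perm.permMatrix, PEquiv.toMatrix_apply, Equiv.toPEquiv_apply]
    by_cases hj : σ i = j
    · subst hj; simp [h i]
    · simp [hj]
  simp only at h1
  rw [h2, Matrix.det_permutation] at h1
  rcases Int.units_eq_one_or (Equiv.Perm.sign σ) with h | h <;> simp [h] at h1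

lemma cfPoly_deg (n : ℕ) (c : Fin n × Fin n → Bool) : (cfPoly n c).totalDegree ≤ n := by
  rw [cfPoly, Matrix.det_apply]
  apply MvPolynomial.totalDegree_finsetSum_le
  intro σ _
  refine (MvPolynomial.totalDegree_smul_le _ _).trans ?_
  refine (MvPolynomial.totalDegree_finsetProd _ _).trans ?_
  refine (Finset.sum_le_card_nsmul _ _ 1 fun i _ => ?_).trans (by simp)
  simp only [Matrix.of_apply]
  split_ifs <;> simp

lemma cf_SZ {ι : Type*} [Fintype ι] [DecidableEq ι] (p : MvPolynomial ι ℝ) (hp : p ≠ 0)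
    (S : Finset ℝ) (hS : S.Nonempty) :
    (((Fintype.piFinset fun _ : ι => S).filter fun x => MvPolynomial.eval x p = 0).card : ℝ) ≤
      p.totalDegree / S.card * S.card ^ (Fintype.card ι) := by
  classical
  let e := Fintype.equivFin ι
  have hp' : MvPolynomial.rename e p ≠ 0 := by
    rwa [Ne, (MvPolynomial.rename_injective e e.injective).eq_iff' (map_zero _)]
  have h := MvPolynomial.schwartz_zippel_totalDegree hp' S
  have hc : ((Fintype.piFinset fun _ : ι => S).filter fun x => MvPolynomial.eval x p = 0).card =
      ((Fintype.piFinset fun _ : Fin (Fintype.card ι) => S).filter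
        fun f => MvPolynomial.eval f (MvPolynomial.rename e p) = 0).card := by
    apply Finset.card_bij' (fun x _ => x ∘ e.symm) (fun f _ => f ∘ e)
    · intro x hx
      simp only [Finset.mem_filter, Fintype.mem_piFinset] at hx ⊢
      refine ⟨fun i => hx.1 _, ?_⟩
      rw [MvPolynomial.eval_rename]
      simpa [Function.comp_assoc] using hx.2
    · intro x hx
      simp only [Finset.mem_filter, Fintype.mem_piFinset] at hx ⊢
      refine ⟨fun i => hx.1 _, ?_⟩
      rw [MvPolynomial.eval_rename] at hx
      exact hx.2
    · intro x _; ext i; simp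
    · intro x _; ext i; simp
  have hd : (MvPolynomial.rename e p).totalDegree ≤ p.totalDegree :=
    MvPolynomial.totalDegree_rename_le _ _
  have h' : ((((Fintype.piFinset fun _ : Fin (Fintype.card ι) => S).filter
        fun f => MvPolynomial.eval f (MvPolynomial.rename e p) = 0).card : ℝ)) /
        (S.card : ℝ) ^ (Fintype.card ι) ≤ (MvPolynomial.rename e p).totalDegree / S.card := by
    have h2 := (NNRat.cast_le (K := ℝ)).2 h
    push_cast at h2
    exact h2
  have hS0 : (0 : ℝ) < S.card := by exact_mod_cast hS.card_pos
  rw [div_le_iff₀ (by positivity)] at h'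
  rw [hc]
  refine h'.trans ?_
  gcongr

noncomputable def cfS (S : Finset ℝ) : Measure ℝ := (S.card : ENNReal)⁻¹ • ∑ x ∈ S, Measure.dirac x

lemma cfS_apply (S : Finset ℝ) (T : Set ℝ) [DecidablePred (· ∈ T)] (hT : MeasurableSet T) :
    cfS S T = (S.card : ENNReal)⁻¹ * (S.filter (· ∈ T)).card := by
  rw [cfS, Measure.smul_apply, Measure.finsetSum_apply, smul_eq_mul]
  congr 1
  simp only [Measure.dirac_apply' _ hT, Set.indicator_apply, Pi.one_apply]
  simp

lemma cfS_prob (S : Finset ℝ) (hS : S.Nonempty) : IsProbabilityMeasure (cfS S) := by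
  classical
  constructor
  rw [cfS_apply S _ MeasurableSet.univ]
  simp only [Set.mem_univ, Finset.filter_true]
  exact ENNReal.inv_mul_cancel (by simpa using hS.ne_empty) (by simp)

lemma cfS_pi {ι : Type*} [Fintype ι] [DecidableEq ι] (S : Finset ℝ) (hS : S.Nonempty)
    (p : MvPolynomial ι ℝ) (hp : p ≠ 0) :
    (Measure.pi fun _ : ι => cfS S) {x | MvPolynomial.eval x p = 0} ≤
      ENNReal.ofReal (p.totalDegree / S.card) := by
  classical
  have := cfS_prob S hS
  set F := (Fintype.piFinset fun _ : ι => S).filter fun x => MvPolynomial.eval x p = 0 with hF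
  have h0 : (Measure.pi fun _ : ι => cfS S) (Set.univ.pi fun _ => (S : Set ℝ))ᶜ = 0 := by
    rw [prob_compl_eq_zero_iff (MeasurableSet.univ_pi fun _ => S.measurableSet), Measure.pi_pi]
    apply Finset.prod_eq_one
    intro i _
    rw [cfS_apply S _ S.measurableSet]
    simp only [Finset.mem_coe, Finset.filter_mem_eq_inter, Finset.inter_self]
    exact ENNReal.inv_mul_cancel (by simpa using hS.ne_empty) (by simp)
  have hsub : {x : ι → ℝ | MvPolynomial.eval x p = 0} ⊆
      (F : Set (ι → ℝ)) ∪ (Set.univ.pi fun _ => (S : Set ℝ))ᶜ := by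
    intro x hx
    by_cases hxS : x ∈ Set.univ.pi fun _ => (S : Set ℝ)
    · left
      simp only [hF, Finset.coe_filter, Fintype.mem_piFinset, Set.mem_ofPred_eq]
      exact ⟨fun i => by simpa using hxS i (Set.mem_univ i), hx⟩
    · right; exact hxS
  refine (measure_mono hsub).trans ((measure_union_le _ _).trans ?_)
  rw [h0, add_zero, ← sum_measure_singleton]
  have hs : ∀ x ∈ F, (Measure.pi fun _ : ι => cfS S) {x} =
      ((S.card : ENNReal)⁻¹) ^ (Fintype.card ι) := by
    intro x hx
    rw [Measure.pi_singleton, Finset.prod_congr rfl (g := fun _ => (S.card : ENNReal)⁻¹)]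
    · simp
    · intro i _
      rw [cfS_apply S _ (measurableSet_singleton _)]
      have : S.filter (· ∈ ({x i} : Set ℝ)) = {x i} := by
        ext y
        simp only [hF, Finset.mem_filter, Fintype.mem_piFinset] at hx
        simp only [Finset.mem_filter, Set.mem_singleton_iff, Finset.mem_singleton]
        constructor
        · exact fun h => h.2
        · rintro rfl; exact ⟨hx.1 i, rfl⟩
      rw [this]; simp
  rw [Finset.sum_congr rfl hs, Finset.sum_const, nsmul_eq_mul]
  have h := cf_SZ p hp S hS
  have hS0 : (0 : ℝ) < S.card := by exact_mod_cast hS.card_pos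
  have e : (F.card : ENNReal) * ((S.card : ENNReal)⁻¹) ^ (Fintype.card ι) =
      ENNReal.ofReal (F.card * ((S.card : ℝ)⁻¹) ^ (Fintype.card ι)) := by
    rw [ENNReal.ofReal_mul (by positivity), ENNReal.ofReal_pow (by positivity),
      ENNReal.ofReal_inv_of_pos hS0, ENNReal.ofReal_natCast, ENNReal.ofReal_natCast]
  rw [e]
  apply ENNReal.ofReal_le_ofReal
  rw [inv_pow, ← div_eq_mul_inv, div_le_iff₀ (by positivity)]
  exact h

noncomputable def cfB (p : ℝ) : Measure Bool :=
  ENNReal.ofReal p • Measure.dirac true + ENNReal.ofReal (1 - p) • Measure.dirac false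

lemma cfB_prob (p : ℝ) (h0 : 0 ≤ p) (h1 : 0 ≤ 1 - p) : IsProbabilityMeasure (cfB p) := by
  constructor
  simp [cfB]
  rw [← ENNReal.ofReal_add h0 h1]; simp

lemma cfB_false (p : ℝ) : cfB p {false} = ENNReal.ofReal (1 - p) := by
  simp [cfB]

lemma cfB_block (n : ℕ) (p : ℝ) (h0 : 0 ≤ p) (h1 : 0 ≤ 1 - p) (A B : Finset (Fin n)) :
    (Measure.pi fun _ : Fin n × Fin n => cfB p) {c | ∀ i ∈ A, ∀ j ∈ B, c (i, j) = false} =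
      ENNReal.ofReal ((1 - p) ^ (A.card * B.card)) := by
  classical
  have := cfB_prob p h0 h1
  have : {c : Fin n × Fin n → Bool | ∀ i ∈ A, ∀ j ∈ B, c (i, j) = false} =
      Set.univ.pi fun ij => if ij ∈ A ×ˢ B then {false} else Set.univ := by
    ext c
    simp only [Set.mem_ofPred_eq, Set.mem_pi, Set.mem_univ, true_imp_iff, Prod.forall]
    constructor
    · intro h i j
      split_ifs with hij
      · rw [Finset.mem_product] at hij; exact h i hij.1 j hij.2
      · trivial
    · intro h i hi j hj
      have := h i j
      rw [if_pos (Finset.mem_product.2 ⟨hi, hj⟩)] at this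
      exact this
  rw [this, Measure.pi_pi]
  have h2 : ∀ ij : Fin n × Fin n, cfB p (if ij ∈ A ×ˢ B then {false} else Set.univ) =
      if ij ∈ A ×ˢ B then ENNReal.ofReal (1 - p) else 1 := by
    intro ij; split_ifs
    · exact cfB_false p
    · exact measure_univ
  rw [Finset.prod_congr rfl fun ij _ => h2 ij, Finset.prod_ite_mem, Finset.univ_inter,
    Finset.prod_const, Finset.card_product, ENNReal.ofReal_pow h1]

lemma cfB_match (n : ℕ) (p : ℝ) (h0 : 0 ≤ p) (h1 : 0 ≤ 1 - p) :
    (Measure.pi fun _ : Fin n × Fin n => cfB p)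
      {c | ∃ σ : Equiv.Perm (Fin n), ∀ i, c (i, σ i) = true}ᶜ ≤
    ENNReal.ofReal (∑ a ∈ Finset.range n, (n.choose (a + 1) : ℝ) * (n.choose a) *
      (1 - p) ^ ((a + 1) * (n - a))) := by
  classical
  have hsub : {c : Fin n × Fin n → Bool | ∃ σ : Equiv.Perm (Fin n), ∀ i, c (i, σ i) = true}ᶜ ⊆
      ⋃ a ∈ Finset.range n, ⋃ A ∈ Finset.powersetCard (a + 1) (Finset.univ : Finset (Fin n)),
        ⋃ B ∈ Finset.powersetCard (n - a) (Finset.univ : Finset (Fin n)),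
          {c | ∀ i ∈ A, ∀ j ∈ B, c (i, j) = false} := by
    intro c hc
    rcases cf_hall n c with h | ⟨a, ha, A, hA, B, hB, h⟩
    · exact absurd h hc
    · simp only [Set.mem_iUnion]
      exact ⟨a, Finset.mem_range.2 ha, A, hA, B, hB, h⟩
  refine (measure_mono hsub).trans ((measure_biUnion_finset_le _ _).trans ?_)
  rw [ENNReal.ofReal_sum_of_nonneg (fun a _ => by positivity)]
  apply Finset.sum_le_sum
  intro a ha
  rw [Finset.mem_range] at ha
  refine (measure_biUnion_finset_le _ _).trans ?_
  have hin : ∀ A ∈ Finset.powersetCard (a + 1) (Finset.univ : Finset (Fin n)),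
      (Measure.pi fun _ : Fin n × Fin n => cfB p)
        (⋃ B ∈ Finset.powersetCard (n - a) (Finset.univ : Finset (Fin n)),
          {c | ∀ i ∈ A, ∀ j ∈ B, c (i, j) = false}) ≤
      (n.choose a : ENNReal) * ENNReal.ofReal ((1 - p) ^ ((a + 1) * (n - a))) := by
    intro A hA
    refine (measure_biUnion_finset_le _ _).trans ?_
    refine (Finset.sum_le_card_nsmul _ _
      (ENNReal.ofReal ((1 - p) ^ ((a + 1) * (n - a)))) fun B hB => ?_).trans ?_
    · rw [cfB_block n p h0 h1, (Finset.mem_powersetCard.1 hA).2, (Finset.mem_powersetCard.1 hB).2]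
    · rw [Finset.card_powersetCard, nsmul_eq_mul, Finset.card_univ, Fintype.card_fin,
        Nat.choose_symm ha.le]
  refine (Finset.sum_le_card_nsmul _ _ _ hin).trans ?_
  rw [Finset.card_powersetCard, nsmul_eq_mul, Finset.card_univ, Fintype.card_fin,
    ENNReal.ofReal_mul (by positivity), ENNReal.ofReal_mul (by positivity),
    ENNReal.ofReal_natCast, ENNReal.ofReal_natCast, mul_assoc]

lemma cf_logsq (n : ℕ) (hn : 12 ≤ n) : 0 ≤ 1 - Real.log n ^ 2 / n := by
  have h0 : (12 : ℝ) ≤ n := by exact_mod_cast hn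
  have hn0 : (0 : ℝ) < n := by linarith
  rw [sub_nonneg, div_le_one hn0]
  have hs : 0 < Real.sqrt n := Real.sqrt_pos.2 hn0
  have h1 := Real.log_le_sub_one_of_pos (x := Real.sqrt n / 2) (by positivity)
  rw [Real.log_div hs.ne' (by norm_num), Real.log_sqrt hn0.le] at h1
  have h2 := Real.log_two_lt_d9
  have h3 : Real.log n ≤ Real.sqrt n := by linarith
  have h4 : 0 ≤ Real.log n := Real.log_natCast_nonneg n
  calc Real.log n ^ 2 ≤ Real.sqrt n ^ 2 := by gcongr
    _ = (n : ℝ) := Real.sq_sqrt hn0.le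

/-- the p-Bernoulli code with p = 2 ln(n)/n, n ≥ 12.  Each of the n² entries
independently equals a uniformly random element of the finite nonempty set S ⊆ ℝ with
probability p and 0 otherwise (modeled by a coin in `Bool` paired with a uniform draw from
S).  The probability that the resulting n×n matrix is invertible is at least
(1 − n²/|S|)·(1 − (ln n)²/n). -/
theorem stmt_7 (n : ℕ) (hn : 12 ≤ n) (S : Finset ℝ) (hS : S.Nonempty) :
    (let p : ℝ := 2 * Real.log n / n
    let μb : Measure Bool :=
      ENNReal.ofReal p • Measure.dirac true + ENNReal.ofReal (1 - p) • Measure.dirac false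
    let μS : Measure ℝ := (S.card : ENNReal)⁻¹ • ∑ x ∈ S, Measure.dirac x
    let μ : Measure (Fin n × Fin n → Bool × ℝ) := Measure.pi fun _ => μb.prod μS
    ENNReal.ofReal ((1 - (n : ℝ) ^ 2 / S.card) * (1 - Real.log n ^ 2 / n)) ≤
      μ {ω | IsUnit (Matrix.of fun i j : Fin n =>
        if (ω (i, j)).1 = true then (ω (i, j)).2 else 0).det}) := by
  classical
  intro p μb μS μ
  have hn0 : (0 : ℝ) < n := by exact_mod_cast (by omega : 0 < n)
  have hp1 : 0 ≤ 1 - p := cf_pos n hn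
  have hL0 : 0 ≤ Real.log n := Real.log_natCast_nonneg n
  have hp0 : 0 ≤ p := by positivity
  have hpb : IsProbabilityMeasure (cfB p) := cfB_prob p hp0 hp1
  have hps : IsProbabilityMeasure (cfS S) := cfS_prob S hS
  have hS0 : (0 : ℝ) < S.card := by exact_mod_cast hS.card_pos
  set E : Set (Fin n × Fin n → Bool) :=
    {c | ∃ σ : Equiv.Perm (Fin n), ∀ i, c (i, σ i) = true} with hE
  set πb := Measure.pi fun _ : Fin n × Fin n => cfB p with hπb
  set πS := Measure.pi fun _ : Fin n × Fin n => cfS S with hπS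
  let D : Set ((Fin n × Fin n → Bool) × (Fin n × Fin n → ℝ)) :=
    {z | IsUnit (Matrix.of fun i j : Fin n => if z.1 (i, j) = true then z.2 (i, j) else 0).det}
  have hD : MeasurableSet D := by
    have e : D = {z | (Matrix.of fun i j : Fin n =>
        if z.1 (i, j) = true then z.2 (i, j) else 0).det = 0}ᶜ := by
      ext z; simp [D, isUnit_iff_ne_zero]
    rw [e]
    refine (measurableSet_eq_fun ?_ measurable_const).compl
    simp only [Matrix.det_apply, Matrix.of_apply]
    refine Finset.measurable_sum _ fun σ _ => ?_
    refine Measurable.const_smul (Finset.measurable_prod _ fun i _ => ?_) _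
    refine Measurable.ite ?_ (by fun_prop) measurable_const
    exact (by fun_prop : Measurable fun z : (Fin n × Fin n → Bool) × (Fin n × Fin n → ℝ) =>
      z.1 (σ i, i)) (measurableSet_singleton true)
  have hmp := measurePreserving_arrowProdEquivProdArrow Bool ℝ (Fin n × Fin n)
    (fun _ => cfB p) (fun _ => cfS S)
  have hμ : μ {ω | IsUnit (Matrix.of fun i j : Fin n =>
        if (ω (i, j)).1 = true then (ω (i, j)).2 else 0).det} = (πb.prod πS) D :=
    hmp.measure_preimage_equiv D
  rw [hμ, Measure.prod_apply hD]
  have hsec : ∀ c ∈ E, ENNReal.ofReal (1 - (n : ℝ) ^ 2 / S.card) ≤ πS (Prod.mk c ⁻¹' D) := by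
    rintro c ⟨σ, hσ⟩
    have h1 := cfS_pi S hS (cfPoly n c) (cfPoly_ne n c σ hσ)
    have h2 : Prod.mk c ⁻¹' D = {x | MvPolynomial.eval x (cfPoly n c) = 0}ᶜ := by
      ext x; simp [D, cfPoly_eval, isUnit_iff_ne_zero]
    have hm : MeasurableSet {x | MvPolynomial.eval x (cfPoly n c) = 0} := by
      rw [← MeasurableSet.compl_iff, ← h2]; exact measurable_prodMk_left hD
    rw [h2, prob_compl_eq_one_sub hm, ENNReal.ofReal_sub _ (by positivity), ENNReal.ofReal_one]
    refine tsub_le_tsub_left (h1.trans (ENNReal.ofReal_le_ofReal ?_)) _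
    gcongr
    have h3 : ((cfPoly n c).totalDegree : ℝ) ≤ n := by exact_mod_cast cfPoly_deg n c
    have h4 : (1 : ℝ) ≤ n := by exact_mod_cast (by omega : 1 ≤ n)
    nlinarith
  have hEm : MeasurableSet E := Set.Finite.measurableSet (Set.toFinite E)
  have hEp : ENNReal.ofReal (1 - Real.log n ^ 2 / n) ≤ πb E := by
    have h1 := (cfB_match n p hp0 hp1).trans (ENNReal.ofReal_le_ofReal (cf_num n hn))
    have h2 : πb E = 1 - πb Eᶜ := by
      rw [← prob_compl_eq_one_sub hEm.compl, compl_compl]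
    rw [h2, ENNReal.ofReal_sub _ (by positivity), ENNReal.ofReal_one]
    exact tsub_le_tsub_left h1 _
  rcases le_or_gt (1 - (n : ℝ) ^ 2 / S.card) 0 with hneg | hpos
  · have h1 : 0 ≤ 1 - Real.log n ^ 2 / n := by
      exact cf_logsq n hn
    rw [ENNReal.ofReal_of_nonpos (mul_nonpos_of_nonpos_of_nonneg hneg h1)]
    exact zero_le
  · rw [ENNReal.ofReal_mul hpos.le]
    calc _ ≤ ENNReal.ofReal (1 - (n : ℝ) ^ 2 / S.card) * πb E := by gcongr
      _ = ∫⁻ _ in E, ENNReal.ofReal (1 - (n : ℝ) ^ 2 / S.card) ∂πb := by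
        rw [setLIntegral_const]
      _ ≤ ∫⁻ c in E, πS (Prod.mk c ⁻¹' D) ∂πb := setLIntegral_mono' hEm hsec
      _ ≤ _ := setLIntegral_le_lintegral _ _
end

section
/- Let n ≥ 12 and p = 2 ln(n)/n. Consider the random bipartite graph on two vertex sets X and Y of size n in which each of the n² possible edges is present independently with probability p. Then the probability that this graph contains a perfect matching (a bijection σ : X → Y with every pair (x, σ(x)) an edge) is at least 1 − (ln n)²/n. -/
open MeasureTheory

namespace PMatch

/-- union bound term -/
noncomputable def term (n : ℕ) (q : ℝ) (j : ℕ) : ℝ :=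
  (n.choose (j+1) : ℝ) * (n.choose (n - j) : ℝ) * q ^ ((j+1) * (n - j))

lemma hall_fail {n : ℕ} (ω : Fin n × Fin n → Bool)
    (h : ¬ ∃ σ : Equiv.Perm (Fin n), ∀ x : Fin n, ω (x, σ x) = true) :
    ∃ j ∈ Finset.range n, ∃ A ∈ Finset.powersetCard (j+1) (Finset.univ : Finset (Fin n)),
      ∃ B ∈ Finset.powersetCard (n-j) (Finset.univ : Finset (Fin n)),
        ∀ x ∈ A, ∀ y ∈ B, ω (x, y) = false := by
  classical
  let t : Fin n → Finset (Fin n) := fun x => Finset.univ.filter fun y => ω (x, y) = true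
  have h1 : ¬ ∀ s : Finset (Fin n), s.card ≤ (s.biUnion t).card := by
    intro hs
    obtain ⟨f, hf, hft⟩ := (Finset.all_card_le_biUnion_card_iff_exists_injective t).1 hs
    apply h
    refine ⟨Equiv.ofBijective f (Finite.injective_iff_bijective.1 hf), fun x => ?_⟩
    have := hft x
    simpa [t] using this
  push Not at h1
  obtain ⟨A, hA⟩ := h1
  have hAn : A.card ≤ n := by simpa using Finset.card_le_univ A
  have hc : ((A.biUnion t)ᶜ).card = n - (A.biUnion t).card := by
    simp [Finset.card_compl]
  obtain ⟨B, hB, hBc⟩ := Finset.exists_subset_card_eq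
    (show n - (A.card - 1) ≤ ((A.biUnion t)ᶜ).card by omega)
  refine ⟨A.card - 1, by simp; omega, A, by simp [Finset.mem_powersetCard]; omega, B,
    by simp [Finset.mem_powersetCard, hBc], ?_⟩
  intro x hx y hy
  have := hB hy
  simp only [Finset.mem_compl, Finset.mem_biUnion, not_exists, not_and] at this
  have := this x hx
  simpa [t] using this

lemma prob_bound (n : ℕ) (p : ℝ) (hp0 : 0 ≤ p) (hp1 : p ≤ 1) (c : ℝ)
    (hc : ∑ j ∈ Finset.range n, term n (1-p) j ≤ c) :
    ENNReal.ofReal (1 - c) ≤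
      (Measure.pi fun _ : Fin n × Fin n => (ENNReal.ofReal p • Measure.dirac true +
        ENNReal.ofReal (1 - p) • Measure.dirac false : Measure Bool))
      {ω | ∃ σ : Equiv.Perm (Fin n), ∀ x : Fin n, ω (x, σ x) = true} := by
  classical
  set μb : Measure Bool := ENNReal.ofReal p • Measure.dirac true +
        ENNReal.ofReal (1 - p) • Measure.dirac false with hμb
  have huniv : μb Set.univ = 1 := by
    simp only [hμb, Measure.add_apply, Measure.smul_apply, measure_univ, smul_eq_mul, mul_one]
    rw [← ENNReal.ofReal_add hp0 (by linarith)]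
    simp
  have hfalse : μb {false} = ENNReal.ofReal (1-p) := by
    simp [hμb]
  have : IsProbabilityMeasure μb := ⟨huniv⟩
  set μ := Measure.pi fun _ : Fin n × Fin n => μb with hμ
  set E : Set (Fin n × Fin n → Bool) :=
    {ω | ∃ σ : Equiv.Perm (Fin n), ∀ x : Fin n, ω (x, σ x) = true} with hE
  let F : Finset (Fin n) → Finset (Fin n) → Set (Fin n × Fin n → Bool) := fun A B =>
    {ω | ∀ x ∈ A, ∀ y ∈ B, ω (x, y) = false}
  have hF : ∀ A B, μ (F A B) = ENNReal.ofReal (1-p) ^ (A.card * B.card) := by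
    intro A B
    have : F A B = Set.pi Set.univ (fun e : Fin n × Fin n =>
        if e ∈ A ×ˢ B then ({false} : Set Bool) else Set.univ) := by
      ext ω
      simp only [F, Set.mem_ofPred_eq, Set.mem_pi, Set.mem_univ, true_implies, Prod.forall]
      constructor
      · intro h x y
        split_ifs with hm
        · rw [Finset.mem_product] at hm
          exact h x hm.1 y hm.2
        · trivial
      · intro h x hx y hy
        have := h x y
        rw [if_pos (Finset.mk_mem_product hx hy)] at this
        exact this
    rw [this, hμ, Measure.pi_pi]
    have : ∀ e : Fin n × Fin n, μb (if e ∈ A ×ˢ B then ({false} : Set Bool) else Set.univ)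
        = if e ∈ A ×ˢ B then ENNReal.ofReal (1-p) else 1 := by
      intro e
      split_ifs
      · exact hfalse
      · exact huniv
    simp only [this]
    rw [Finset.prod_ite_mem]
    simp
  have hEc : μ Eᶜ ≤ ENNReal.ofReal c := by
    have hsub : Eᶜ ⊆ ⋃ j ∈ Finset.range n,
        ⋃ A ∈ Finset.powersetCard (j+1) (Finset.univ : Finset (Fin n)),
        ⋃ B ∈ Finset.powersetCard (n-j) (Finset.univ : Finset (Fin n)), F A B := by
      intro ω hω
      obtain ⟨j, hj, A, hA, B, hB, hh⟩ := hall_fail ω hω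
      simp only [Set.mem_iUnion]
      exact ⟨j, hj, A, hA, B, hB, hh⟩
    have h1p : 0 ≤ 1 - p := by linarith
    calc μ Eᶜ ≤ _ := measure_mono hsub
      _ ≤ ∑ j ∈ Finset.range n, μ (⋃ A ∈ Finset.powersetCard (j+1) (Finset.univ : Finset (Fin n)),
        ⋃ B ∈ Finset.powersetCard (n-j) (Finset.univ : Finset (Fin n)), F A B) :=
          measure_biUnion_finset_le _ _
      _ ≤ ∑ j ∈ Finset.range n, ENNReal.ofReal (term n (1-p) j) := by
          refine Finset.sum_le_sum fun j hj => ?_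
          calc _ ≤ ∑ A ∈ Finset.powersetCard (j+1) (Finset.univ : Finset (Fin n)), μ (
                ⋃ B ∈ Finset.powersetCard (n-j) (Finset.univ : Finset (Fin n)), F A B) :=
                measure_biUnion_finset_le _ _
            _ ≤ ∑ A ∈ Finset.powersetCard (j+1) (Finset.univ : Finset (Fin n)),
                ∑ B ∈ Finset.powersetCard (n-j) (Finset.univ : Finset (Fin n)), μ (F A B) :=
                Finset.sum_le_sum fun A _ => measure_biUnion_finset_le _ _
            _ = ∑ A ∈ Finset.powersetCard (j+1) (Finset.univ : Finset (Fin n)),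
                ∑ B ∈ Finset.powersetCard (n-j) (Finset.univ : Finset (Fin n)),
                  ENNReal.ofReal (1-p) ^ ((j+1) * (n-j)) := by
                refine Finset.sum_congr rfl fun A hA => Finset.sum_congr rfl fun B hB => ?_
                rw [hF, (Finset.mem_powersetCard.1 hA).2, (Finset.mem_powersetCard.1 hB).2]
            _ ≤ _ := by
                simp only [Finset.sum_const, Finset.card_powersetCard, Finset.card_univ,
                  Fintype.card_fin, nsmul_eq_mul]
                rw [term, mul_assoc, ENNReal.ofReal_mul (by positivity),
                  ENNReal.ofReal_mul (by positivity), ENNReal.ofReal_natCast,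
                  ENNReal.ofReal_natCast, ENNReal.ofReal_pow h1p]
      _ = ENNReal.ofReal (∑ j ∈ Finset.range n, term n (1-p) j) := by
          rw [ENNReal.ofReal_sum_of_nonneg]
          intro j _
          unfold term
          positivity
      _ ≤ _ := ENNReal.ofReal_le_ofReal hc
  have hEm : MeasurableSet E := Set.Finite.measurableSet (Set.toFinite _)
  have hc0 : 0 ≤ c := le_trans (Finset.sum_nonneg fun j _ => by
    have h1p : 0 ≤ 1 - p := by linarith
    unfold term
    positivity) hc
  rw [ENNReal.ofReal_sub _ hc0, ENNReal.ofReal_one]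
  have := prob_add_prob_compl (μ := μ) hEm
  rw [← this]
  refine tsub_le_iff_right.2 ?_
  gcongr

lemma term_mono (n : ℕ) {q q' : ℝ} (h0 : 0 ≤ q) (h : q ≤ q') (j : ℕ) :
    term n q j ≤ term n q' j := by
  unfold term
  gcongr

lemma term_refl (n : ℕ) (q : ℝ) (j : ℕ) (hj : j < n) :
    term n q (n - 1 - j) = term n q j := by
  unfold term
  have h1 : n - 1 - j + 1 = n - j := by omega
  have h2 : n - (n - 1 - j) = j + 1 := by omega
  rw [h1, h2, mul_comm (n - j) (j+1)]
  ring

/-- tail constants -/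
noncomputable def b (j : ℕ) : ℝ := (2*j)^(j+1) / ((j+1).factorial * j.factorial)

lemma b_succ (j : ℕ) (hj : 12 ≤ j) : b (j+1) ≤ b j / 2 := by
  have hj0 : (12:ℝ) ≤ j := by exact_mod_cast hj
  have hjpos : (0:ℝ) < j := by linarith
  have key : ((j:ℝ)+1)^(j+1) ≤ (13/4) * (j:ℝ)^(j+1) := by
    have h1 : (1 + 1/(j:ℝ))^j ≤ 3 := by
      calc (1 + 1/(j:ℝ))^j ≤ (Real.exp (1/(j:ℝ)))^j := by
            gcongr
            linarith [Real.add_one_le_exp (1/(j:ℝ))]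
        _ = Real.exp 1 := by
            rw [← Real.exp_nat_mul]
            congr 1
            field_simp
        _ ≤ 3 := by linarith [Real.exp_one_lt_d9]
    have h2 : 1 + 1/(j:ℝ) ≤ 13/12 := by
      have : 1/(j:ℝ) ≤ 1/12 := by gcongr
      linarith
    have h3 : (j:ℝ)+1 = j * (1 + 1/(j:ℝ)) := by field_simp
    rw [h3, mul_pow, mul_comm, pow_succ (1 + 1/(j:ℝ))]
    gcongr
    calc _ ≤ (3:ℝ) * (13/12) := by gcongr
      _ = _ := by norm_num
  have hf : (0:ℝ) < (j.factorial : ℝ) := by positivity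
  unfold b
  rw [div_div, Nat.factorial_succ (j+1), Nat.factorial_succ j]
  push_cast
  rw [div_le_div_iff₀ (by positivity) (by positivity)]
  have e1 : (2*((j:ℝ)+1))^(j+1+1) = 2^(j+1) * 2 * (((j:ℝ)+1)^(j+1) * (j+1)) := by
    rw [mul_pow]; ring
  have e2 : (2*(j:ℝ))^(j+1) = 2^(j+1) * (j:ℝ)^(j+1) := by rw [mul_pow]
  rw [e1, e2]
  have : (2:ℝ)^(j+1) * (((j:ℝ)+1)*(j+1)) * (j.factorial:ℝ)^2 * (4 * ((j:ℝ)+1)^(j+1)) ≤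
      (2:ℝ)^(j+1) * (((j:ℝ)+1)*(j+1)) * (j.factorial:ℝ)^2 * ((j+2) * (j:ℝ)^(j+1)) := by
    gcongr ?_ * ?_
    have : 0 ≤ ((j:ℝ)-11) * (j:ℝ)^(j+1) := mul_nonneg (by linarith) (by positivity)
    linarith
  nlinarith [this]

noncomputable def a (j : ℕ) : ℝ :=
  if j < 12 then (1.294:ℝ)^(j*(j+1)) / ((j+1).factorial * j.factorial) else b 12 * (1/2)^(j-12)

lemma b_le (i : ℕ) : b (12+i) ≤ b 12 * (1/2)^i := by
  induction i with
  | zero => simp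
  | succ k ih =>
    have := b_succ (12+k) (by omega)
    rw [pow_succ]
    rw [show 12 + (k+1) = 12 + k + 1 by ring]
    linarith

lemma a_nonneg (j : ℕ) : 0 ≤ a j := by
  unfold a b
  split_ifs <;> positivity

lemma a_sum (n : ℕ) : ∑ j ∈ Finset.range n, a j ≤ 3.2 := by
  have h1 : ∑ j ∈ Finset.range n, a j ≤ ∑ j ∈ Finset.range (12 + n), a j :=
    Finset.sum_le_sum_of_subset_of_nonneg (Finset.range_mono (by omega)) (fun j _ _ => a_nonneg j)
  have hb : b 12 ≤ 0.295 := by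
    unfold b
    norm_num [Nat.factorial]
  have hb0 : 0 ≤ b 12 := by unfold b; positivity
  rw [Finset.sum_range_add] at h1
  have h2 : ∑ j ∈ Finset.range 12, a j ≤ 2.56 := by
    simp only [Finset.sum_range_succ, Finset.sum_range_zero, a]
    norm_num [Nat.factorial]
  have h3 : ∑ x ∈ Finset.range n, a (12 + x) ≤ b 12 * 2 := by
    have : ∀ x, a (12+x) = b 12 * (1/2)^x := by
      intro x
      simp [a]
    simp only [this]
    rw [← Finset.mul_sum]
    gcongr
    exact sum_geometric_two_le n
  linarith

lemma log_lb (n : ℕ) (hn : 25 ≤ n) : 3.2 ≤ Real.log n := by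
  have hn' : (25:ℝ) ≤ n := by exact_mod_cast hn
  rw [Real.le_log_iff_exp_le (by linarith)]
  refine le_trans ?_ hn'
  have h : (Real.exp 3.2)^5 ≤ 25^5 := by
    rw [← Real.exp_nat_mul, show ((5:ℕ):ℝ) * 3.2 = (16:ℕ) * 1 by norm_num, Real.exp_nat_mul]
    calc (Real.exp 1)^16 ≤ 2.7182818286^16 := by
          gcongr; exact Real.exp_one_lt_d9.le
      _ ≤ _ := by norm_num
  exact le_of_pow_le_pow_left₀ (by norm_num) (by norm_num) h

lemma log_lb12 (n : ℕ) (hn : 12 ≤ n) : 2.4 ≤ Real.log n := by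
  have hn' : (12:ℝ) ≤ n := by exact_mod_cast hn
  rw [Real.le_log_iff_exp_le (by linarith)]
  refine le_trans ?_ hn'
  have h : (Real.exp 2.4)^5 ≤ 12^5 := by
    rw [← Real.exp_nat_mul, show ((5:ℕ):ℝ) * 2.4 = (12:ℕ) * 1 by norm_num, Real.exp_nat_mul]
    calc (Real.exp 1)^12 ≤ 2.7182818286^12 := by
          gcongr; exact Real.exp_one_lt_d9.le
      _ ≤ _ := by norm_num
  exact le_of_pow_le_pow_left₀ (by norm_num) (by norm_num) h

lemma log_lb17 (n : ℕ) (hn : 17 ≤ n) : 2.8 ≤ Real.log n := by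
  have hn' : (17:ℝ) ≤ n := by exact_mod_cast hn
  rw [Real.le_log_iff_exp_le (by linarith)]
  refine le_trans ?_ hn'
  have h : (Real.exp 2.8)^5 ≤ 17^5 := by
    rw [← Real.exp_nat_mul, show ((5:ℕ):ℝ) * 2.8 = (14:ℕ) * 1 by norm_num, Real.exp_nat_mul]
    calc (Real.exp 1)^14 ≤ 2.7182818286^14 := by
          gcongr; exact Real.exp_one_lt_d9.le
      _ ≤ _ := by norm_num
  exact le_of_pow_le_pow_left₀ (by norm_num) (by norm_num) h

/-- `log x / x` is antitone past `e`. -/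
lemma log_div_le {m n : ℕ} (hm : 3 ≤ m) (hmn : m ≤ n) :
    Real.log n / n ≤ Real.log m / m := by
  have hm' : (3:ℝ) ≤ m := by exact_mod_cast hm
  have hn' : (m:ℝ) ≤ n := by exact_mod_cast hmn
  have := Real.exp_one_lt_d9
  exact Real.log_div_self_antitoneOn (by simp; linarith) (by simp; linarith) hn'

lemma p_le_one (n : ℕ) (hn : 12 ≤ n) : 2 * Real.log n / n ≤ 1 := by
  have h := log_div_le (m := 8) (by norm_num) (show 8 ≤ n by omega)
  have h8 : Real.log (8:ℕ) = 3 * Real.log 2 := by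
    rw [show ((8:ℕ):ℝ) = 2^3 by norm_num, Real.log_pow]; norm_num
  rw [h8] at h
  have := Real.log_two_lt_d9
  rw [mul_div_assoc]
  push_cast at h
  linarith

lemma exp_small (n : ℕ) (hn : 25 ≤ n) : Real.exp (2 * Real.log n / n) ≤ 1.294 := by
  have h := log_div_le (m := 25) (by norm_num) hn
  have : Real.exp (2 * Real.log n / n) ≤ Real.exp (2 * (Real.log (25:ℕ) / (25:ℕ))) := by
    rw [Real.exp_le_exp, mul_div_assoc]; linarith
  refine this.trans ?_
  refine le_of_pow_le_pow_left₀ (n := 25) (by norm_num) (by norm_num) ?_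
  rw [← Real.exp_nat_mul]
  have : ((25:ℕ):ℝ) * (2 * (Real.log (25:ℕ) / (25:ℕ))) = Real.log (25:ℕ) + Real.log (25:ℕ) := by
    push_cast; ring
  rw [this, Real.exp_add, Real.exp_log (by norm_num)]
  norm_num

lemma exp_a (n j : ℕ) (hn : 25 ≤ n) (hj : 2 * j ≤ n) :
    Real.exp (2 * Real.log n / n) ^ (j*(j+1)) / ((j+1).factorial * j.factorial) ≤ a j := by
  unfold a
  split_ifs with h
  · gcongr
    exact exp_small n hn
  · push Not at h
    have h1 : Real.exp (2 * Real.log n / n) ^ j ≤ 2 * j := by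
      have h2 := log_div_le (m := 2*j) (by omega) hj
      have hj0 : (0:ℝ) < (2*j : ℕ) := by exact_mod_cast (by omega : 0 < 2*j)
      rw [le_div_iff₀ hj0] at h2
      rw [← Real.exp_nat_mul]
      have : Real.exp ((j:ℝ) * (2 * Real.log n / n)) ≤ Real.exp (Real.log (2*j : ℕ)) := by
        rw [Real.exp_le_exp]
        refine le_trans (le_of_eq ?_) h2
        push_cast; ring
      rw [Real.exp_log hj0] at this
      exact_mod_cast this
    have h3 := b_le (j - 12)
    rw [show 12 + (j - 12) = j by omega] at h3
    refine le_trans ?_ h3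
    unfold b
    rw [pow_mul]
    gcongr

lemma term_large (n j : ℕ) (hn : 25 ≤ n) (hj : 2 * j ≤ n) :
    term n (1 - 2 * Real.log n / n) j ≤ a j / n := by
  have hn0 : (0:ℝ) < n := by exact_mod_cast (by omega : 0 < n)
  set P := 2 * Real.log n / n with hP
  have hp1 := p_le_one n (by omega)
  have hq : 1 - P ≤ Real.exp (-P) := by linarith [Real.add_one_le_exp (-P)]
  have hexp : Real.exp (-P) ^ ((j+1)*(n-j)) =
      Real.exp P ^ (j*(j+1)) / (n:ℝ)^(2*(j+1)) := by
    rw [eq_div_iff (by positivity)]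
    have hl : (n:ℝ)^(2*(j+1)) = Real.exp (Real.log n) ^ (2*(j+1)) := by rw [Real.exp_log hn0]
    rw [hl]
    rw [← Real.exp_nat_mul, ← Real.exp_nat_mul, ← Real.exp_nat_mul, ← Real.exp_add]
    congr 1
    push_cast [Nat.cast_sub (show j ≤ n by omega)]
    rw [hP]
    field_simp
    ring
  have hc1 : (n.choose (j+1) : ℝ) ≤ (n:ℝ)^(j+1) / (j+1).factorial := Nat.choose_le_pow_div _ _
  have hc2 : (n.choose (n-j) : ℝ) ≤ (n:ℝ)^j / j.factorial := by
    rw [Nat.choose_symm (by omega)]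
    exact Nat.choose_le_pow_div _ _
  calc term n (1 - P) j ≤ term n (Real.exp (-P)) j := term_mono n (by linarith) hq j
    _ ≤ ((n:ℝ)^(j+1) / (j+1).factorial) * ((n:ℝ)^j / j.factorial) *
        (Real.exp P ^ (j*(j+1)) / (n:ℝ)^(2*(j+1))) := by
        unfold term
        rw [hexp]
        gcongr
    _ = (Real.exp P ^ (j*(j+1)) / ((j+1).factorial * j.factorial)) / n := by
        field_simp
        ring
    _ ≤ _ := by
        gcongr
        exact exp_a n j hn hj

lemma sum_large (n : ℕ) (hn : 25 ≤ n) :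
    ∑ j ∈ Finset.range n, term n (1 - 2 * Real.log n / n) j ≤ Real.log n ^ 2 / n := by
  have h1 : ∑ j ∈ Finset.range n, term n (1 - 2 * Real.log n / n) j ≤
      ∑ j ∈ Finset.range n, (a j / n + a (n - 1 - j) / n) := by
    refine Finset.sum_le_sum fun j hj => ?_
    have hj' := Finset.mem_range.1 hj
    have p1 : 0 ≤ a j / n := div_nonneg (a_nonneg _) (by positivity)
    have p2 : 0 ≤ a (n - 1 - j) / n := div_nonneg (a_nonneg _) (by positivity)
    rcases le_or_gt (2*j) n with h | h
    · linarith [term_large n j hn h]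
    · have := term_large n (n - 1 - j) hn (by omega)
      rw [term_refl n _ j hj'] at this
      linarith
  rw [Finset.sum_add_distrib, Finset.sum_range_reflect (fun j => a j / n) n,
    ← Finset.sum_div, ← add_div] at h1
  refine h1.trans ?_
  gcongr
  have := a_sum n
  nlinarith [log_lb n hn]

lemma sum_small12 (n : ℕ) (hn : 12 ≤ n) (hn' : n < 17) :
    ∑ j ∈ Finset.range n, term n (1 - 4.8 / n) j ≤ 5.76 / n := by
  interval_cases n <;> simp only [Finset.sum_range_succ, Finset.sum_range_zero, term] <;>
    norm_num [Nat.choose]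

lemma sum_small17 (n : ℕ) (hn : 17 ≤ n) (hn' : n < 25) :
    ∑ j ∈ Finset.range n, term n (1 - 5.6 / n) j ≤ 5.76 / n := by
  interval_cases n <;> simp only [Finset.sum_range_succ, Finset.sum_range_zero, term] <;>
    norm_num [Nat.choose]

lemma sum_all (n : ℕ) (hn : 12 ≤ n) :
    ∑ j ∈ Finset.range n, term n (1 - 2 * Real.log n / n) j ≤ Real.log n ^ 2 / n := by
  have hp1 := p_le_one n hn
  have hl := log_lb12 n hn
  have h5 : 5.76 / (n:ℝ) ≤ Real.log n ^ 2 / n := by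
    gcongr
    nlinarith
  rcases lt_or_ge n 17 with h | h
  · refine le_trans (Finset.sum_le_sum fun j _ => term_mono n (by linarith) ?_ j)
      ((sum_small12 n hn h).trans h5)
    gcongr
    linarith
  · rcases lt_or_ge n 25 with h' | h'
    · refine le_trans (Finset.sum_le_sum fun j _ => term_mono n (by linarith) ?_ j)
        ((sum_small17 n h h').trans h5)
      gcongr
      linarith [log_lb17 n h]
    · exact sum_large n h'

end PMatch

/-- the p-Bernoulli random bipartite graph on two vertex sets of size n ≥ 12,
each of the n² edges present independently with probability p = 2 ln(n)/n, contains a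
perfect matching with probability at least 1 − (ln n)²/n. -/
theorem stmt_8 (n : ℕ) (hn : 12 ≤ n) :
    (let p : ℝ := 2 * Real.log n / n
    let μb : Measure Bool :=
      ENNReal.ofReal p • Measure.dirac true + ENNReal.ofReal (1 - p) • Measure.dirac false
    let μ : Measure (Fin n × Fin n → Bool) := Measure.pi fun _ => μb
    ENNReal.ofReal (1 - Real.log n ^ 2 / n) ≤
      μ {ω | ∃ σ : Equiv.Perm (Fin n), ∀ x : Fin n, ω (x, σ x) = true}) := by
  intro p μb μ
  have hl := PMatch.log_lb12 n hn
  exact PMatch.prob_bound n p (by positivity) (PMatch.p_le_one n hn) _ (PMatch.sum_all n hn)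
end

section
/- For every constant c > 0 there exist a constant C > 0 and an integer N such that for all integers n ≥ N and all integers s with 0 ≤ s ≤ (ln n)^c, setting m = n + s, the following holds. Independently: each left vertex i ∈ {1,…,n} chooses a uniformly random 2-element subset L_i ⊆ {1,…,n}, and each right vertex j ∈ {1,…,n} chooses a uniformly random 3-element subset R_j ⊆ {1,…,m}. Form the bipartite graph on left vertices {1,…,n} and right vertices {1,…,n} with an edge between i and j if and only if j ∈ L_i or i ∈ R_j (left vertices being identified with the first n elements of {1,…,m}). Then the probability that this graph contains a perfect matching is at least 1 − C/n. Consequently the (2,3)-cross code achieves the probabilistic recovery threshold of n when the number of stragglers is polylogarithmic in n. -/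
open scoped Classical

lemma cc_choose_le (d N k : ℕ) (h : d ≤ N) : d.choose k * N ^ k ≤ d ^ k * N.choose k := by
  have key : ∀ k, d.descFactorial k * N ^ k ≤ d ^ k * N.descFactorial k := by
    intro k
    induction k with
    | zero => simp
    | succ k ih =>
      rw [Nat.descFactorial_succ, Nat.descFactorial_succ, pow_succ, pow_succ]
      have h1 : (d - k) * N ≤ d * (N - k) := by
        rw [Nat.sub_mul, Nat.mul_sub]
        apply Nat.sub_le_sub_left
        rw [mul_comm d k]
        exact Nat.mul_le_mul_left _ h
      calc (d - k) * d.descFactorial k * (N ^ k * N)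
          = ((d - k) * N) * (d.descFactorial k * N ^ k) := by ring
        _ ≤ (d * (N - k)) * (d ^ k * N.descFactorial k) := Nat.mul_le_mul h1 ih
        _ = _ := by ring
  have := key k
  rw [Nat.descFactorial_eq_factorial_mul_choose, Nat.descFactorial_eq_factorial_mul_choose] at this
  have hk := Nat.factorial_pos k
  apply Nat.le_of_mul_le_mul_left _ hk
  calc _ = k.factorial * d.choose k * N ^ k := by ring
    _ ≤ _ := this
    _ = _ := by ring

/-- number of families of `k`-sets with the members indexed by `A` inside `D`. -/
lemma cc_count {α β : Type} [Fintype α] [Fintype β] (k : ℕ)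
    [Fintype {f : α → Finset β // ∀ i, (f i).card = k}] (A : Finset α) (D : Finset β)
    (hβ : 0 < Fintype.card β) :
    ((Finset.univ.filter fun f : {f : α → Finset β // ∀ i, (f i).card = k} =>
        ∀ i ∈ A, f.1 i ⊆ D).card : ℝ) ≤
      ((D.card : ℝ) / Fintype.card β) ^ (k * A.card) *
        (Fintype.card {f : α → Finset β // ∀ i, (f i).card = k} : ℝ) := by
  have htot : Fintype.card {f : α → Finset β // ∀ i, (f i).card = k}
      = ∏ _i : α, (Fintype.card β).choose k := by
    rw [Fintype.card_subtype]
    rw [show (Finset.univ.filter fun f : α → Finset β => ∀ i, (f i).card = k)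
      = Fintype.piFinset (fun _ : α => Finset.powersetCard k Finset.univ) by
        ext f; simp [Finset.mem_powersetCard]]
    rw [Fintype.card_piFinset]
    simp
  have hcnt : (Finset.univ.filter fun f : {f : α → Finset β // ∀ i, (f i).card = k} =>
        ∀ i ∈ A, f.1 i ⊆ D).card ≤ ∏ i : α, (if i ∈ A then D.card.choose k
          else (Fintype.card β).choose k) := by
    have : ∏ i : α, (if i ∈ A then D.card.choose k else (Fintype.card β).choose k)
      = (Fintype.piFinset (fun i : α => if i ∈ A then Finset.powersetCard k D
          else Finset.powersetCard k Finset.univ)).card := by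
      rw [Fintype.card_piFinset]
      apply Finset.prod_congr rfl
      intro i _
      split_ifs <;> simp
    rw [this]
    apply Finset.card_le_card_of_injOn (fun f => f.1)
    · intro f hf
      simp only [Finset.coe_filter, Finset.mem_univ, true_and, Set.mem_ofPred_eq] at hf
      simp only [Finset.mem_coe, Fintype.mem_piFinset]
      intro i
      split_ifs with hi
      · exact Finset.mem_powersetCard.2 ⟨hf i hi, f.2 i⟩
      · exact Finset.mem_powersetCard.2 ⟨Finset.subset_univ _, f.2 i⟩
    · intro f _ g _ h
      exact Subtype.ext h
  have hβ' : (0 : ℝ) < Fintype.card β := by exact_mod_cast hβ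
  calc _ ≤ ((∏ i : α, (if i ∈ A then D.card.choose k
          else (Fintype.card β).choose k) : ℕ) : ℝ) := by exact_mod_cast hcnt
    _ ≤ ∏ i : α, ((if i ∈ A then ((D.card : ℝ) / Fintype.card β) ^ k else 1) *
          ((Fintype.card β).choose k : ℝ)) := by
        push_cast
        apply Finset.prod_le_prod
        · intro i _
          split_ifs <;> positivity
        · intro i _
          split_ifs
          · rw [div_pow, div_mul_eq_mul_div, le_div_iff₀ (by positivity)]
            exact_mod_cast cc_choose_le D.card _ k (Finset.card_le_univ D)
          · simp
    _ = _ := by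
        rw [Finset.prod_mul_distrib, htot]
        push_cast
        congr 1
        rw [Finset.prod_ite_mem]
        simp [pow_mul]

lemma cc_choose_bound (p b : ℕ) : (p + b).choose p * (p ^ p * b ^ b) ≤ (p + b) ^ (p + b) := by
  rw [add_pow p b (p + b)]
  have := Finset.single_le_sum (f := fun m => p ^ m * b ^ (p + b - m) * (p + b).choose m)
    (s := Finset.range (p + b + 1)) (fun i _ => Nat.zero_le _) (a := p)
    (Finset.mem_range.2 (by omega))
  simp only [Nat.add_sub_cancel_left] at this
  calc _ = p ^ p * b ^ b * (p + b).choose p := by ring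
    _ ≤ _ := this

/-- generic bound of the union-bound term. -/
lemma cc_term (p b : ℕ) (hp : 0 < p) (hb : 0 < b) (v : ℝ) (hv : 0 ≤ v) :
    ((p + b).choose p : ℝ) * ((p + b).choose (p + 1) : ℝ) *
      (((p : ℝ) / (p + b)) ^ (2 * (p + 1)) * v ^ (3 * b)) ≤
    (p : ℝ) * b / (p + b) ^ 2 * ((((p : ℝ) + b) / b) ^ 2 * v ^ 3) ^ b := by
  have hp' : (0 : ℝ) < p := by exact_mod_cast hp
  have hb' : (0 : ℝ) < b := by exact_mod_cast hb
  set n : ℝ := (p : ℝ) + b with hn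
  have hn0 : 0 < n := by positivity
  set X : ℝ := ((p + b).choose p : ℝ) with hX
  have hX0 : 0 ≤ X := by positivity
  have h1 : ((p + b).choose (p + 1) : ℝ) = X * (b / (p + 1)) := by
    have := Nat.choose_succ_right_eq (p + b) p
    rw [Nat.add_sub_cancel_left] at this
    have h2 : ((p + b).choose (p + 1) : ℝ) * (p + 1) = X * b := by
      rw [hX]; exact_mod_cast this
    field_simp
    exact h2
  have hY : X * (p / n) ^ p ≤ (n / b) ^ b := by
    have := cc_choose_bound p b
    have h3 : X * ((p : ℝ) ^ p * (b : ℝ) ^ b) ≤ n ^ (p + b) := by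
      rw [hX, hn]; exact_mod_cast this
    rw [div_pow, div_pow, ← mul_div_assoc, div_le_div_iff₀ (by positivity) (by positivity)]
    calc _ = X * ((p : ℝ) ^ p * (b : ℝ) ^ b) := by ring
      _ ≤ _ := h3
      _ = _ := by rw [pow_add]; ring
  have hfrac : (b : ℝ) / (p + 1) * (p / n) ^ 2 ≤ p * b / n ^ 2 := by
    rw [div_pow, div_mul_div_comm, div_le_div_iff₀ (by positivity) (by positivity)]
    have : (0 : ℝ) ≤ b * p * n ^ 2 := by positivity
    nlinarith
  calc _ = (X * (p / n) ^ p) ^ 2 * (b / (p + 1) * (p / n) ^ 2) * v ^ (3 * b) := by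
        rw [h1]; ring
    _ ≤ ((n / b) ^ b) ^ 2 * (p * b / n ^ 2) * v ^ (3 * b) := by gcongr
    _ = _ := by
        rw [mul_pow, ← pow_mul, ← pow_mul, ← pow_mul, mul_comm b 2]; ring

lemma cc_half_le : (1 / 2 : ℝ) ≤ Real.exp (-(1 / 4)) := by
  have := Real.add_one_le_exp (-(1 / 4) : ℝ)
  linarith

lemma cc_term2 (p b s : ℕ) (hb : 0 < b) (hs : 343 * (s : ℝ) ^ 3 ≤ ((p : ℝ) + b) / 2) :
    ((p + b).choose p : ℝ) * ((p + b).choose (p + 1) : ℝ) *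
      (((p : ℝ) / (p + b)) ^ (2 * (p + 1)) *
        (((b : ℝ) + s - 1) / ((p : ℝ) + b + s)) ^ (3 * b)) ≤
    (1 / ((p : ℝ) + b)) * (b * Real.exp (-(1 / 4)) ^ b + p * Real.exp (-(1 / 4)) ^ p) := by
  rcases Nat.eq_zero_or_pos p with rfl | hp
  · simp; positivity
  have hp' : (1 : ℝ) ≤ p := by exact_mod_cast hp
  have hb' : (1 : ℝ) ≤ b := by exact_mod_cast hb
  have hs0 : (0 : ℝ) ≤ s := by positivity
  set v : ℝ := ((b : ℝ) + s - 1) / ((p : ℝ) + b + s) with hvdef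
  have hv : 0 ≤ v := div_nonneg (by linarith) (by positivity)
  refine (cc_term p b hp hb v hv).trans ?_
  set n : ℝ := (p : ℝ) + b with hn
  have hn0 : 0 < n := by positivity
  set r := Real.exp (-(1 / 4)) with hr
  have hr0 : 0 < r := Real.exp_pos _
  set W : ℝ := (n / b) ^ 2 * v ^ 3 with hW
  have hW0 : 0 ≤ W := by positivity
  have hpn : (p : ℝ) / n ≤ 1 := by rw [div_le_one hn0]; linarith
  have hbn : (b : ℝ) / n ≤ 1 := by rw [div_le_one hn0]; linarith
  -- two ways to conclude
  have fin1 : W ^ b ≤ r ^ b → (p : ℝ) * b / n ^ 2 * W ^ b ≤ 1 / n * (b * r ^ b + p * r ^ p) := by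
    intro h
    calc (p : ℝ) * b / n ^ 2 * W ^ b = 1 / n * ((p / n) * (b * W ^ b)) := by field_simp
      _ ≤ 1 / n * (1 * (b * r ^ b)) := by gcongr
      _ ≤ _ := by
        gcongr
        have : 0 ≤ p * r ^ p := by positivity
        linarith
  have fin2 : W ^ b ≤ r ^ p → (p : ℝ) * b / n ^ 2 * W ^ b ≤ 1 / n * (b * r ^ b + p * r ^ p) := by
    intro h
    calc (p : ℝ) * b / n ^ 2 * W ^ b = 1 / n * ((b / n) * (p * W ^ b)) := by field_simp
      _ ≤ 1 / n * (1 * (p * r ^ p)) := by gcongr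
      _ ≤ _ := by
        gcongr
        have : 0 ≤ b * r ^ b := by positivity
        linarith
  by_cases hbs : (b : ℝ) ≤ 6 * s
  · apply fin1
    apply pow_le_pow_left₀ hW0
    refine le_trans ?_ cc_half_le
    have hv7 : v ≤ 7 * s / n := by
      rw [hvdef]
      apply div_le_div₀ <;> linarith
    calc W ≤ (n / 1) ^ 2 * (7 * s / n) ^ 3 := by rw [hW]; gcongr
      _ = 343 * (s : ℝ) ^ 3 / n := by field_simp; ring
      _ ≤ 1 / 2 := by rw [div_le_iff₀ hn0]; linarith
  · push Not at hbs
    have hq : v * n / b ≤ Real.exp (s * p / (b * n)) := by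
      refine le_trans ?_ (Real.add_one_le_exp _)
      have : v ≤ (b + s) / (n + s) := by
        rw [hvdef]; gcongr; linarith
      calc v * n / b ≤ (b + s) / (n + s) * n / b := by gcongr
        _ = s * p / (b * (n + s)) + 1 := by
          have : n + s ≠ 0 := by positivity
          field_simp
          rw [hn]; ring
        _ ≤ s * p / (b * n) + 1 := by gcongr; linarith
    have hbn2 : b / n ≤ Real.exp (-(p / n)) := by
      refine le_trans (le_of_eq ?_) (Real.add_one_le_exp _)
      field_simp
      rw [hn]; ring
    have hWe : W ≤ Real.exp (-(p / (2 * n))) := by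
      calc W = (b / n) * (v * n / b) ^ 3 := by rw [hW]; field_simp
        _ ≤ Real.exp (-(p / n)) * Real.exp (s * p / (b * n)) ^ 3 := by
          have : 0 ≤ v * n / b := by positivity
          gcongr
        _ = Real.exp (-(p / n) + 3 * (s * p / (b * n))) := by
          rw [← Real.exp_nat_mul, ← Real.exp_add]; norm_num
        _ ≤ _ := by
          apply Real.exp_le_exp.2
          have : 3 * (s * p / (b * n)) ≤ p / (2 * n) := by
            rw [← mul_div_assoc, div_le_div_iff₀ (by positivity) (by positivity)]
            have : 0 ≤ (p * n) * (b - 6 * s) := mul_nonneg (by positivity) (by linarith)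
            nlinarith
          have h2 : (p : ℝ) / n = p / (2 * n) + p / (2 * n) := by field_simp; ring
          linarith
    have hWb : W ^ b ≤ Real.exp (b * (-(p / (2 * n)))) := by
      rw [Real.exp_nat_mul]
      exact pow_le_pow_left₀ hW0 hWe b
    by_cases hpb : (p : ℝ) ≤ b
    · apply fin2
      refine hWb.trans ?_
      rw [hr, ← Real.exp_nat_mul]
      apply Real.exp_le_exp.2
      have : (p : ℝ) * (1 / 4) ≤ b * (p / (2 * n)) := by
        rw [show (b : ℝ) * (p / (2 * n)) = b * p / (2 * n) by ring, le_div_iff₀ (by positivity)]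
        nlinarith
      linarith
    · push Not at hpb
      apply fin1
      refine hWb.trans ?_
      rw [hr, ← Real.exp_nat_mul]
      apply Real.exp_le_exp.2
      have : (b : ℝ) * (1 / 4) ≤ b * (p / (2 * n)) := by
        rw [show (b : ℝ) * (p / (2 * n)) = b * p / (2 * n) by ring, le_div_iff₀ (by positivity)]
        nlinarith
      linarith

/-- Hall's theorem: no perfect matching gives a large empty rectangle. -/
lemma cc_hall (n : ℕ) (E : Fin n → Fin n → Prop)
    (h : ¬ ∃ σ : Equiv.Perm (Fin n), ∀ i, E i (σ i)) :
    ∃ A B : Finset (Fin n), A.card + B.card = n + 1 ∧ ∀ i ∈ A, ∀ j ∈ B, ¬ E i j := by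
  have h1 : ¬ ∀ A : Finset (Fin n),
      A.card ≤ (A.biUnion fun i => Finset.univ.filter fun j => E i j).card := by
    intro hall
    obtain ⟨f, hf, hfE⟩ := (Finset.all_card_le_biUnion_card_iff_exists_injective
      (fun i : Fin n => Finset.univ.filter fun j => E i j)).1 hall
    refine h ⟨Equiv.ofBijective f (Finite.injective_iff_bijective.1 hf), fun i => ?_⟩
    simpa using hfE i
  push Not at h1
  obtain ⟨A, hA⟩ := h1
  set U := A.biUnion fun i => Finset.univ.filter fun j => E i j with hU
  have hAn : A.card ≤ n := by simpa using Finset.card_le_univ A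
  have hUc : n + 1 - A.card ≤ Uᶜ.card := by
    rw [Finset.card_compl, Fintype.card_fin]; omega
  obtain ⟨B, hBU, hB⟩ := Finset.exists_subset_card_eq hUc
  refine ⟨A, B, by omega, fun i hi j hj hE => ?_⟩
  have := hBU hj
  rw [Finset.mem_compl] at this
  exact this (Finset.mem_biUnion.2 ⟨i, hi, by simpa using hE⟩)

lemma cc_rect (n s : ℕ) (hn : 0 < n) (A B : Finset (Fin n)) :
    ((Finset.univ.filter fun ω :
          {f : Fin n → Finset (Fin n) // ∀ i, (f i).card = 2} ×
            {g : Fin n → Finset (Fin (n + s)) // ∀ j, (g j).card = 3} =>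
        ∀ i ∈ A, ∀ j ∈ B, ¬ (j ∈ ω.1.val i ∨ Fin.castAdd s i ∈ ω.2.val j)).card : ℝ) ≤
      (((n - B.card : ℕ) : ℝ) / n) ^ (2 * A.card) *
        (((n + s - A.card : ℕ) : ℝ) / (n + s : ℕ)) ^ (3 * B.card) *
      (Fintype.card
        ({f : Fin n → Finset (Fin n) // ∀ i, (f i).card = 2} ×
          {g : Fin n → Finset (Fin (n + s)) // ∀ j, (g j).card = 3}) : ℝ) := by
  have h1 := cc_count (α := Fin n) (β := Fin n) 2 A Bᶜ (by simpa using hn)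
  have h2 := cc_count (α := Fin n) (β := Fin (n + s)) 3 B (A.map (Fin.castAddEmb s))ᶜ
    (by simp; omega)
  rw [Finset.card_compl, Fintype.card_fin] at h1 h2
  rw [Finset.card_map] at h2
  have hle : (Finset.univ.filter fun ω :
          {f : Fin n → Finset (Fin n) // ∀ i, (f i).card = 2} ×
            {g : Fin n → Finset (Fin (n + s)) // ∀ j, (g j).card = 3} =>
        ∀ i ∈ A, ∀ j ∈ B, ¬ (j ∈ ω.1.val i ∨ Fin.castAdd s i ∈ ω.2.val j)) ⊆
      (Finset.univ.filter fun f : {f : Fin n → Finset (Fin n) // ∀ i, (f i).card = 2} =>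
        ∀ i ∈ A, f.1 i ⊆ Bᶜ) ×ˢ
      (Finset.univ.filter fun f : {g : Fin n → Finset (Fin (n + s)) // ∀ j, (g j).card = 3} =>
        ∀ i ∈ B, f.1 i ⊆ (A.map (Fin.castAddEmb s))ᶜ) := by
    intro ω hω
    simp only [Finset.mem_filter, Finset.mem_univ, true_and] at hω
    simp only [Finset.mem_product, Finset.mem_filter, Finset.mem_univ, true_and]
    refine ⟨fun i hi j hj => ?_, fun j hj x hx => ?_⟩
    · rw [Finset.mem_compl]
      exact fun hjB => hω i hi j hjB (Or.inl hj)
    · rw [Finset.mem_compl, Finset.mem_map]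
      rintro ⟨i, hi, rfl⟩
      exact hω i hi j hj (Or.inr hx)
  have hc := Finset.card_le_card hle
  rw [Finset.card_product] at hc
  rw [Fintype.card_prod]
  refine (Nat.cast_le (α := ℝ).2 hc).trans ?_
  · · push_cast
      refine le_trans (le_of_eq ?_) ((mul_le_mul h1 h2 (by positivity)
        (by positivity)).trans (le_of_eq ?_))
      · congr!
      · push_cast
        ring

/-- the (2,3)-cross code with polylogarithmically many stragglers.  For every
c > 0 there are C > 0 and N such that for all n ≥ N and 0 ≤ s ≤ (ln n)^c (m = n + s):
if each left vertex i of an n+n bipartite graph picks a uniform 2-subset L_i of the n right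
vertices and each right vertex j picks a uniform 3-subset R_j of the m workers, with an
edge i–j iff j ∈ L_i or i ∈ R_j (left vertices identified with the first n of the m
workers), then the graph has a perfect matching with probability at least 1 − C/n
(stated by counting: at least (1 − C/n) of all configurations admit a matching). -/
theorem stmt_17 (c : ℝ) (hc : 0 < c) :
    ∃ C : ℝ, 0 < C ∧ ∃ N : ℕ, ∀ n : ℕ, N ≤ n → ∀ s : ℕ,
      (s : ℝ) ≤ Real.log n ^ c →
      (1 - C / n) *
          (Fintype.card
            ({f : Fin n → Finset (Fin n) // ∀ i, (f i).card = 2} ×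
              {g : Fin n → Finset (Fin (n + s)) // ∀ j, (g j).card = 3}) : ℝ) ≤
        ((Finset.univ.filter fun ω :
              {f : Fin n → Finset (Fin n) // ∀ i, (f i).card = 2} ×
                {g : Fin n → Finset (Fin (n + s)) // ∀ j, (g j).card = 3} =>
            ∃ σ : Equiv.Perm (Fin n), ∀ i : Fin n,
              σ i ∈ ω.1.val i ∨ Fin.castAdd s i ∈ ω.2.val (σ i)).card : ℝ) := by
  classical
  set r := Real.exp (-(1 / 4)) with hr
  have hr0 : 0 < r := Real.exp_pos _
  have hr1 : r < 1 := by rw [hr, ← Real.exp_zero]; exact Real.exp_lt_exp.2 (by norm_num)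
  have hsum : Summable (fun k : ℕ => (k : ℝ) * r ^ k) :=
    (hasSum_coe_mul_geometric_of_norm_lt_one
      (by rwa [Real.norm_eq_abs, abs_of_pos hr0] : ‖r‖ < 1)).summable
  set K := ∑' k : ℕ, (k : ℝ) * r ^ k with hK
  have hKle : ∀ S : Finset ℕ, ∑ k ∈ S, (k : ℝ) * r ^ k ≤ K :=
    fun S => hsum.sum_le_tsum S (fun i _ => by positivity)
  have hK0 : 0 ≤ K := by simpa using hKle ∅
  have hlo := (isLittleO_log_rpow_rpow_atTop c (show (0 : ℝ) < 1 / 3 by norm_num)).bound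
    (show (0 : ℝ) < 1 / 9 by norm_num)
  have hlo2 := tendsto_natCast_atTop_atTop (R := ℝ) |>.eventually hlo
  obtain ⟨N, hN⟩ := Filter.eventually_atTop.1 hlo2
  refine ⟨2 * K + 1, by linarith, max N 1, fun n hn s hs => ?_⟩
  have hn1 : 1 ≤ n := (le_max_right _ _).trans hn
  have hn0 : (0 : ℝ) < n := by exact_mod_cast hn1
  have hs3 : 343 * (s : ℝ) ^ 3 ≤ (n : ℝ) / 2 := by
    have h1 := hN n ((le_max_left _ _).trans hn)
    have h2 : (s : ℝ) ≤ 1 / 9 * (n : ℝ) ^ (1 / 3 : ℝ) := by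
      refine hs.trans ((le_abs_self _).trans ?_)
      rw [Real.norm_eq_abs, Real.norm_eq_abs, abs_of_nonneg (Real.rpow_nonneg hn0.le _)] at h1
      exact h1
    have h3 : (s : ℝ) ^ 3 ≤ (1 / 9 * (n : ℝ) ^ (1 / 3 : ℝ)) ^ 3 :=
      pow_le_pow_left₀ (by positivity) h2 3
    have h4 : ((n : ℝ) ^ (1 / 3 : ℝ)) ^ 3 = n := by
      rw [← Real.rpow_natCast, ← Real.rpow_mul hn0.le]; norm_num
    rw [mul_pow, h4] at h3
    linarith
  set Ω := ({f : Fin n → Finset (Fin n) // ∀ i, (f i).card = 2} ×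
              {g : Fin n → Finset (Fin (n + s)) // ∀ j, (g j).card = 3}) with hΩ
  set M : ℝ := (Fintype.card Ω : ℝ) with hM
  have hM0 : 0 ≤ M := by positivity
  set good : Ω → Prop := fun ω => ∃ σ : Equiv.Perm (Fin n), ∀ i : Fin n,
              σ i ∈ ω.1.val i ∨ Fin.castAdd s i ∈ ω.2.val (σ i) with hgood
  have hsplit : ((Finset.univ.filter good).card : ℝ)
      + ((Finset.univ.filter fun ω => ¬ good ω).card : ℝ) = M := by
    rw [hM]
    exact_mod_cast Finset.card_filter_add_card_filter_not (s := Finset.univ) good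
  let rect : Finset (Fin n) × Finset (Fin n) → Finset Ω := fun P =>
    Finset.univ.filter fun ω : Ω =>
      ∀ i ∈ P.1, ∀ j ∈ P.2, ¬ (j ∈ ω.1.val i ∨ Fin.castAdd s i ∈ ω.2.val j)
  let pairs : ℕ → Finset (Finset (Fin n) × Finset (Fin n)) := fun b =>
    Finset.powersetCard (n + 1 - b) Finset.univ ×ˢ Finset.powersetCard b Finset.univ
  have hcover : (Finset.univ.filter fun ω => ¬ good ω) ⊆
      (Finset.Icc 1 n).biUnion fun b => (pairs b).biUnion rect := by
    intro ω hω
    simp only [Finset.mem_filter, Finset.mem_univ, true_and] at hω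
    obtain ⟨A, B, hAB, hE⟩ := cc_hall n
      (fun i j => j ∈ ω.1.val i ∨ Fin.castAdd s i ∈ ω.2.val j) hω
    have hA : A.card ≤ n := by simpa using Finset.card_le_univ A
    have hB : B.card ≤ n := by simpa using Finset.card_le_univ B
    refine Finset.mem_biUnion.2 ⟨B.card, Finset.mem_Icc.2 ⟨by omega, hB⟩, ?_⟩
    refine Finset.mem_biUnion.2 ⟨(A, B), ?_, ?_⟩
    · simp only [pairs, Finset.mem_product, Finset.mem_powersetCard, Finset.subset_univ, true_and]
      exact ⟨by omega, trivial⟩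
    · simpa only [rect, Finset.mem_filter, Finset.mem_univ, true_and] using hE
  have hterm : ∀ b ∈ Finset.Icc 1 n, ((((pairs b).biUnion rect).card : ℕ) : ℝ) ≤
      (1 / (n : ℝ)) * (b * r ^ b + ((n - b : ℕ) : ℝ) * r ^ (n - b)) * M := by
    intro b hb
    rw [Finset.mem_Icc] at hb
    obtain ⟨p, rfl⟩ : ∃ p, n = p + b := ⟨n - b, by omega⟩
    have e1 : p + b + 1 - b = p + 1 := by omega
    have e2 : p + b - b = p := by omega
    have e3 : p + b + s - (p + 1) = b + s - 1 := by omega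
    have e4 : ((b + s - 1 : ℕ) : ℝ) = (b : ℝ) + s - 1 := by
      rw [Nat.cast_sub (by omega)]; push_cast; ring
    have hsum1 : (((pairs b).biUnion rect).card : ℝ) ≤ ∑ P ∈ pairs b, ((rect P).card : ℝ) := by
      exact_mod_cast Finset.card_biUnion_le
    have heach : ∀ P ∈ pairs b, ((rect P).card : ℝ) ≤ (((p : ℝ) / (p + b)) ^ (2 * (p + 1)) *
        (((b : ℝ) + s - 1) / ((p : ℝ) + b + s)) ^ (3 * b)) * M := by
      intro P hP
      simp only [pairs, Finset.mem_product, Finset.mem_powersetCard, Finset.subset_univ,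
        true_and, e1] at hP
      have := cc_rect (p + b) s (by omega) P.1 P.2
      rw [hP.1, hP.2, e2, e3, e4] at this
      push_cast at this
      convert this using 1
    have hcardp : ((pairs b).card : ℝ)
        = ((p + b).choose p : ℝ) * ((p + b).choose (p + 1) : ℝ) := by
      simp only [pairs, Finset.card_product, Finset.card_powersetCard, Finset.card_univ,
        Fintype.card_fin, e1]
      rw [Nat.choose_symm_add, Nat.cast_mul, mul_comm]
    have h2 := cc_term2 p b s (by omega) (by push_cast at hs3; exact hs3)
    calc _ ≤ _ := hsum1
      _ ≤ _ := Finset.sum_le_card_nsmul _ _ _ heach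
      _ = (((p + b).choose p : ℝ) * ((p + b).choose (p + 1) : ℝ) *
        (((p : ℝ) / (p + b)) ^ (2 * (p + 1)) *
        (((b : ℝ) + s - 1) / ((p : ℝ) + b + s)) ^ (3 * b))) * M := by
          rw [nsmul_eq_mul, hcardp]; ring
      _ ≤ _ := by
          rw [e2]
          push_cast
          exact mul_le_mul_of_nonneg_right h2 hM0
  have hbad : ((Finset.univ.filter fun ω => ¬ good ω).card : ℝ) ≤ 2 * K / n * M := by
    calc ((Finset.univ.filter fun ω => ¬ good ω).card : ℝ)
        ≤ (((Finset.Icc 1 n).biUnion fun b => (pairs b).biUnion rect).card : ℝ) := by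
          exact_mod_cast Finset.card_le_card hcover
      _ ≤ ∑ b ∈ Finset.Icc 1 n, (((pairs b).biUnion rect).card : ℝ) := by
          exact_mod_cast Finset.card_biUnion_le
      _ ≤ ∑ b ∈ Finset.Icc 1 n,
          (1 / (n : ℝ)) * (b * r ^ b + ((n - b : ℕ) : ℝ) * r ^ (n - b)) * M :=
          Finset.sum_le_sum hterm
      _ = (1 / (n : ℝ)) * (∑ b ∈ Finset.Icc 1 n, (b : ℝ) * r ^ b
            + ∑ b ∈ Finset.Icc 1 n, ((n - b : ℕ) : ℝ) * r ^ (n - b)) * M := by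
          rw [← Finset.sum_add_distrib, Finset.mul_sum, Finset.sum_mul]
      _ ≤ (1 / (n : ℝ)) * (K + K) * M := by
          gcongr
          · exact hKle _
          · have himg : ∑ b ∈ Finset.Icc 1 n, ((n - b : ℕ) : ℝ) * r ^ (n - b)
                = ∑ k ∈ (Finset.Icc 1 n).image (fun b => n - b), (k : ℝ) * r ^ k := by
              rw [Finset.sum_image]
              intro x hx y hy hxy
              simp only [Finset.coe_Icc, Set.mem_Icc] at hx hy
              simp only at hxy
              omega
            rw [himg]
            exact hKle _
      _ = _ := by ring
  have hfin : 2 * K / n * M ≤ (2 * K + 1) / n * M := by gcongr; linarith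
  have : (1 - (2 * K + 1) / n) * M ≤ ((Finset.univ.filter good).card : ℝ) := by
    have : (1 - (2 * K + 1) / n) * M = M - (2 * K + 1) / n * M := by ring
    linarith
  convert this using 1
end

section
/- Let α ∈ (0,1) be such that d₂ := 2/(1−α) is an integer. Then there exist a constant C > 0 and an integer N such that for all integers n ≥ N and all integers s with 0 ≤ s ≤ n^α, setting m = n + s, the following holds. Independently: each left vertex i ∈ {1,…,n} chooses a uniformly random 2-element subset L_i ⊆ {1,…,n}, and each right vertex j ∈ {1,…,n} chooses a uniformly random d₂-element subset R_j ⊆ {1,…,m}. Form the bipartite graph on left vertices {1,…,n} and right vertices {1,…,n} with an edge between i and j if and only if j ∈ L_i or i ∈ R_j (left vertices being identified with the first n elements of {1,…,m}). Then the probability that this graph contains a perfect matching is at least 1 − C/n. Consequently the (2, 2/(1−α))-cross code achieves the probabilistic recovery threshold of n when the number of stragglers is O(n^α). -/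
open scoped Classical

lemma choose_ratio (a b : ℕ) (hab : a ≤ b) (r : ℕ) :
    (a.choose r : ℝ) ≤ (((a : ℝ) + 1) / ((b : ℝ) + 1)) ^ r * (b.choose r : ℝ) := by
  induction r with
  | zero => simp
  | succ r ih =>
    have h1 : ((a.choose (r + 1) : ℕ) : ℝ) * (r + 1) = (a.choose r : ℝ) * ((a - r : ℕ) : ℝ) := by
      exact_mod_cast Nat.choose_succ_right_eq a r
    have h2 : ((b.choose (r + 1) : ℕ) : ℝ) * (r + 1) = (b.choose r : ℝ) * ((b - r : ℕ) : ℝ) := by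
      exact_mod_cast Nat.choose_succ_right_eq b r
    have hab' : (a : ℝ) ≤ b := by exact_mod_cast hab
    have h3 : ((a - r : ℕ) : ℝ) ≤ (((a : ℝ) + 1) / ((b : ℝ) + 1)) * ((b - r : ℕ) : ℝ) := by
      rcases Nat.lt_or_ge a r with h | h
      · rw [Nat.sub_eq_zero_of_le h.le]
        push_cast
        positivity
      · rw [Nat.cast_sub h, Nat.cast_sub (h.trans hab), div_mul_eq_mul_div, le_div_iff₀ (by positivity)]
        have : (0 : ℝ) ≤ r := by positivity
        nlinarith
    have hr : (0 : ℝ) < (r : ℝ) + 1 := by positivity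
    refine le_of_mul_le_mul_right ?_ hr
    rw [h1, mul_assoc, h2, pow_succ]
    calc (a.choose r : ℝ) * ((a - r : ℕ) : ℝ)
        ≤ ((((a : ℝ) + 1) / ((b : ℝ) + 1)) ^ r * (b.choose r : ℝ)) *
            ((((a : ℝ) + 1) / ((b : ℝ) + 1)) * ((b - r : ℕ) : ℝ)) := by
          apply mul_le_mul ih h3 (by positivity) (by positivity)
      _ = _ := by ring

lemma choose_entropy (k l : ℕ) :
    ((k + l).choose k : ℝ) * ((k : ℝ) ^ k * (l : ℝ) ^ l) ≤ ((k : ℝ) + l) ^ (k + l) := by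
  rw [add_pow]
  have := Finset.single_le_sum (s := Finset.range (k + l + 1))
    (f := fun i => (k : ℝ) ^ i * (l : ℝ) ^ (k + l - i) * ((k + l).choose i : ℝ))
    (fun i _ => by positivity) (Finset.mem_range.2 (by omega : k < k + l + 1))
  simp only [Nat.add_sub_cancel_left] at this
  linarith

/-- product of two binomials -/
lemma choose_prod (n j : ℕ) (hj : j < n) :
    (n.choose (j + 1) : ℝ) * (n.choose j : ℝ) * (((j : ℝ) + 1) / ((n : ℝ) + 1)) ^ (2 * (j + 1)) ≤
      (((n - j : ℕ) : ℝ) * ((j : ℝ) + 1) / ((n : ℝ) + 1) ^ 2) *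
        (((n : ℝ) + 1) / ((n - j : ℕ) : ℝ)) ^ (2 * (n - j)) := by
  obtain ⟨l, rfl⟩ : ∃ l, n = j + l := ⟨n - j, by omega⟩
  have hl : 0 < l := by omega
  rw [Nat.add_sub_cancel_left]
  have e1 : ((j + l).choose j : ℝ) * ((j + l : ℕ) + 1 : ℝ) = ((j + 1 + l).choose (j + 1) : ℝ) * ((j : ℝ) + 1) := by
    have := Nat.add_one_mul_choose_eq (j + l) j
    rw [show j + 1 + l = j + l + 1 by ring, mul_comm]
    exact_mod_cast this
  have e2 : ((j + l).choose (j + 1) : ℝ) * ((j + l : ℕ) + 1 : ℝ) = ((j + 1 + l).choose (j + 1) : ℝ) * (l : ℝ) := by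
    have := Nat.choose_mul_succ_eq (j + l) (j + 1)
    rw [show j + l + 1 - (j + 1) = l by omega] at this
    rw [show j + 1 + l = j + l + 1 by ring]
    exact_mod_cast this
  have h := choose_entropy (j + 1) l
  have hN : ((j + l : ℕ) : ℝ) + 1 = ((j + 1 : ℕ) : ℝ) + l := by push_cast; ring
  rw [hN] at e1 e2 ⊢
  have hk' : (j : ℝ) + 1 = ((j + 1 : ℕ) : ℝ) := by push_cast; ring
  rw [hk'] at e1 ⊢
  have hk0 : 0 < ((j + 1 : ℕ) : ℝ) := by positivity
  set k := j + 1
  have hl0 : (0 : ℝ) < l := by positivity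
  set M : ℝ := (k : ℝ) + l
  have hM : 0 < M := by positivity
  set B : ℝ := ((k + l).choose k : ℝ)
  have hB : 0 ≤ B := by positivity
  have f1 : ((j + l).choose j : ℝ) = B * k / M := by rw [eq_div_iff hM.ne']; exact e1
  have f2 : ((j + l).choose k : ℝ) = B * l / M := by rw [eq_div_iff hM.ne']; exact e2
  rw [f1, f2]
  have h2 : B * ((k : ℝ) / M) ^ k ≤ (M / l) ^ l := by
    rw [div_pow, div_pow, le_div_iff₀ (by positivity), mul_div_assoc', div_mul_eq_mul_div,
      div_le_iff₀ (by positivity), ← pow_add, add_comm l k]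
    linarith
  have h3 := pow_le_pow_left₀ (by positivity) h2 2
  calc B * l / M * (B * k / M) * ((k : ℝ) / M) ^ (2 * k)
      = (l * k / M ^ 2) * (B * ((k : ℝ) / M) ^ k) ^ 2 := by
        rw [mul_comm 2 k, pow_mul]; ring
    _ ≤ (l * k / M ^ 2) * ((M / l) ^ l) ^ 2 := by gcongr
    _ = _ := by rw [mul_comm 2 l, pow_mul (M / l)]

/-- one summand of the union bound -/
lemma term_bound (n s d j : ℕ) (hj : j < n) :
    (n.choose (j + 1) : ℝ) * (n.choose j : ℝ) *
      (((j.choose 2 : ℝ) ^ (j + 1) * (n.choose 2 : ℝ) ^ (n - (j + 1))) *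
       (((n + s).choose d : ℝ) ^ j * ((n + s - (j + 1)).choose d : ℝ) ^ (n - j))) ≤
    ((((n - j : ℕ) : ℝ) * ((j : ℝ) + 1) / ((n : ℝ) + 1) ^ 2) *
        ((((n : ℝ) + 1) / ((n - j : ℕ) : ℝ)) ^ 2 *
          ((((n - j : ℕ) : ℝ) + s) / (((n : ℝ) + 1) + s)) ^ d) ^ (n - j)) *
      ((n.choose 2 : ℝ) ^ n * ((n + s).choose d : ℝ) ^ n) := by
  have h1 := choose_ratio j n hj.le 2
  have h2 := choose_ratio (n + s - (j + 1)) (n + s) (by omega) d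
  have hc : (((n + s - (j + 1) : ℕ) : ℝ) + 1) / (((n + s : ℕ) : ℝ) + 1) =
      (((n - j : ℕ) : ℝ) + s) / (((n : ℝ) + 1) + s) := by
    rw [Nat.cast_sub (by omega), Nat.cast_sub hj.le]
    push_cast
    congr 1 <;> ring_nf
  rw [hc] at h2
  have h3 := choose_prod n j hj
  set l : ℝ := ((n - j : ℕ) : ℝ)
  set u := (l + s) / (((n : ℝ) + 1) + s)
  have hu : 0 ≤ u := by positivity
  set v := ((j : ℝ) + 1) / ((n : ℝ) + 1)
  have hv : 0 ≤ v := by positivity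
  set P : ℝ := (n.choose 2 : ℝ)
  set Q : ℝ := ((n + s).choose d : ℝ)
  have hP : 0 ≤ P := by positivity
  have hQ : 0 ≤ Q := by positivity
  calc _ ≤ (n.choose (j + 1) : ℝ) * (n.choose j : ℝ) *
      (((v ^ 2 * P) ^ (j + 1) * P ^ (n - (j + 1))) *
       (Q ^ j * (u ^ d * Q) ^ (n - j))) := by gcongr
    _ = ((n.choose (j + 1) : ℝ) * (n.choose j : ℝ) * v ^ (2 * (j + 1))) * (u ^ d) ^ (n - j) *
        ((P ^ (j + 1) * P ^ (n - (j + 1))) * (Q ^ j * Q ^ (n - j))) := by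
        rw [mul_pow, mul_pow, pow_mul]; ring
    _ = ((n.choose (j + 1) : ℝ) * (n.choose j : ℝ) * v ^ (2 * (j + 1))) * (u ^ d) ^ (n - j) *
        (P ^ n * Q ^ n) := by
        rw [← pow_add, ← pow_add, show j + 1 + (n - (j + 1)) = n by omega,
          show j + (n - j) = n by omega]
    _ ≤ ((l * ((j : ℝ) + 1) / ((n : ℝ) + 1) ^ 2) *
        (((n : ℝ) + 1) / l) ^ (2 * (n - j))) * (u ^ d) ^ (n - j) * (P ^ n * Q ^ n) := by
        gcongr
    _ = _ := by
        rw [pow_mul, mul_pow]; ring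

lemma analytic_large (d k l : ℕ) (hd : 3 ≤ d) (s N δ : ℝ) (hs : 0 ≤ s) (hδ0 : 0 < δ) (hδ : δ ≤ 1)
    (hk : 1 ≤ k) (hl : 1 ≤ l) (hN : (k : ℝ) + l = N) (hsN : s ≤ δ / 4 * N) (hlN : δ * N ≤ l) :
    ((N / l) ^ 2 * ((l + s) / (N + s)) ^ d) ^ l ≤ Real.exp (-(δ / 4)) ^ k := by
  have hk0 : (0 : ℝ) < k := by exact_mod_cast hk
  have hl0 : (0 : ℝ) < l := by exact_mod_cast hl
  have hN0 : 0 < N := by linarith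
  have hNs : 0 < N + s := by linarith
  set u := ((l : ℝ) + s) / (N + s) with hu
  have hu0 : 0 ≤ u := by positivity
  have hu1 : u ≤ 1 := by rw [hu, div_le_one hNs]; linarith
  have hue : u ≤ Real.exp (-(k / (N + s))) := by
    have := Real.add_one_le_exp (-(k / (N + s)))
    have e : u = -(k / (N + s)) + 1 := by rw [hu]; field_simp; linarith
    rw [e]; exact this
  have hw : N / l * u ≤ Real.exp (s * k / (l * N)) := by
    refine le_trans ?_ (Real.add_one_le_exp _)
    rw [hu, div_mul_div_comm, div_le_iff₀ (by positivity)]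
    have e : (s * k / (l * N) + 1) * (l * (N + s)) = (s * k / N + l) * (N + s) := by
      field_simp
    rw [e]
    have e2 : (s * k / N + l) * (N + s) = s * k + l * N + l * s + s * s * k / N := by
      field_simp; ring
    rw [e2]
    have : 0 ≤ s * s * k / N := by positivity
    nlinarith
  have h1 : (N / l) ^ 2 * u ^ d ≤ Real.exp (2 * (s * k / (l * N)) - k / (N + s)) := by
    calc (N / l) ^ 2 * u ^ d ≤ (N / l) ^ 2 * u ^ 3 := by
          gcongr ?_ * ?_
          exact pow_le_pow_of_le_one hu0 hu1 hd
      _ = (N / l * u) ^ 2 * u := by ring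
      _ ≤ (Real.exp (s * k / (l * N))) ^ 2 * Real.exp (-(k / (N + s))) := by gcongr
      _ = _ := by rw [← Real.exp_nat_mul, ← Real.exp_add]; congr 1
  calc _ ≤ (Real.exp (2 * (s * k / (l * N)) - k / (N + s))) ^ l := by gcongr
    _ = Real.exp (k * (2 * (s / N) - l / (N + s))) := by
      rw [← Real.exp_nat_mul]; congr 1; field_simp
    _ ≤ Real.exp (k * (-(δ / 4))) := by
      gcongr
      have a1 : s / N ≤ δ / 4 := by rw [div_le_iff₀ hN0]; exact hsN
      have a2 : 4 / 5 * δ ≤ l / (N + s) := by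
        rw [le_div_iff₀ hNs]
        have : N + s ≤ 5 / 4 * N := by nlinarith
        nlinarith
      linarith
    _ = _ := by rw [Real.exp_nat_mul]

lemma analytic_small (d l : ℕ) (hd : 3 ≤ d) (s N : ℝ) (hs : 0 ≤ s) (hl : 1 ≤ l)
    (hN : 0 < N) (hsd : s ^ d ≤ N ^ (d - 2)) (hlN : (l : ℝ) ≤ (1 / 2) ^ (d + 1) * N) :
    ((N / l) ^ 2 * ((l + s) / (N + s)) ^ d) ^ l ≤
      ((2 : ℝ) ^ (d + 1)) ^ (2 ^ (d + 1)) * (1 / 2) ^ l := by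
  have hl0 : (0 : ℝ) < l := by exact_mod_cast hl
  have hNs : 0 < N + s := by linarith
  have hK : (1 : ℝ) ≤ ((2 : ℝ) ^ (d + 1)) ^ (2 ^ (d + 1)) :=
    one_le_pow₀ (one_le_pow₀ (by norm_num))
  obtain ⟨e, rfl⟩ : ∃ e, d = e + 3 := ⟨d - 3, by omega⟩
  rw [show e + 3 - 2 = e + 1 by omega] at hsd
  have h0 : ((l : ℝ) + s) / (N + s) ≤ (l + s) / N := by
    gcongr; linarith
  rcases le_total s l with h | h
  · have hle1 : (l : ℝ) / N ≤ 1 := by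
      rw [div_le_one hN]
      refine hlN.trans ?_
      have : ((1 : ℝ) / 2) ^ (e + 3 + 1) ≤ 1 := pow_le_one₀ (by norm_num) (by norm_num)
      nlinarith
    have h1 : (N / l) ^ 2 * (((l : ℝ) + s) / (N + s)) ^ (e + 3) ≤ 1 / 2 := by
      calc _ ≤ (N / l) ^ 2 * ((l + l) / N) ^ (e + 3) := by
            gcongr ?_ * ?_ ^ _
            refine h0.trans ?_
            gcongr
        _ = 2 ^ (e + 3) * (l / N) ^ e * (l / N) := by
            rw [show ((l : ℝ) + l) / N = 2 * (l / N) by ring, mul_pow, pow_add (l / N : ℝ) e 3]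
            field_simp
        _ ≤ 2 ^ (e + 3) * 1 * ((1 / 2) ^ (e + 3 + 1)) := by
            gcongr
            · exact pow_le_one₀ (by positivity) hle1
            · rw [div_le_iff₀ hN]; exact hlN
        _ = 1 / 2 := by
            rw [pow_succ (1 / 2 : ℝ) (e + 3), mul_one, ← mul_assoc, ← mul_pow]; norm_num
    calc _ ≤ (1 / 2 : ℝ) ^ l := by gcongr
      _ ≤ _ := le_mul_of_one_le_left (by positivity) hK
  · have h1 : (N / l) ^ 2 * (((l : ℝ) + s) / (N + s)) ^ (e + 3) ≤ 2 ^ (e + 3 + 1) / l ^ 2 * (1 / 2) := by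
      calc _ ≤ (N / l) ^ 2 * ((s + s) / N) ^ (e + 3) := by
            gcongr ?_ * ?_ ^ _
            refine h0.trans ?_
            gcongr
        _ = 2 ^ (e + 3) * s ^ (e + 3) * (N ^ 2 / N ^ (e + 3)) / l ^ 2 := by
            rw [← two_mul, div_pow, div_pow, mul_pow]; ring
        _ ≤ 2 ^ (e + 3) * N ^ (e + 1) * (N ^ 2 / N ^ (e + 3)) / l ^ 2 := by gcongr
        _ = _ := by
            field_simp; ring
    calc _ ≤ ((2 : ℝ) ^ (e + 3 + 1) / l ^ 2 * (1 / 2)) ^ l := by gcongr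
      _ = ((2 : ℝ) ^ (e + 3 + 1) / l ^ 2) ^ l * (1 / 2) ^ l := by rw [mul_pow]
      _ ≤ _ := by
        gcongr ?_ * _
        rcases le_total ((2 : ℝ) ^ (e + 3 + 1)) ((l : ℝ) ^ 2) with h2 | h2
        · refine le_trans (pow_le_one₀ (by positivity) ?_) hK
          rw [div_le_one (by positivity)]; exact h2
        · have hl1 : (1 : ℝ) ≤ l := by exact_mod_cast hl
          have hl2 : (l : ℝ) ≤ 2 ^ (e + 3 + 1) := by nlinarith
          have hl3 : l ≤ 2 ^ (e + 3 + 1) := by exact_mod_cast hl2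
          calc ((2 : ℝ) ^ (e + 3 + 1) / l ^ 2) ^ l ≤ ((2 : ℝ) ^ (e + 3 + 1)) ^ l := by
                gcongr
                exact div_le_self (by positivity) (one_le_pow₀ hl1)
            _ ≤ _ := pow_le_pow_right₀ (one_le_pow₀ (by norm_num)) hl3

lemma geom_bound (r : ℝ) (h0 : 0 ≤ r) (h1 : r < 1) :
    ∃ S : ℝ, 0 ≤ S ∧ ∀ n : ℕ, ∑ k ∈ Finset.range n, (k : ℝ) * r ^ k ≤ S := by
  have hs : Summable (fun k : ℕ => (k : ℝ) * r ^ k) := by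
    simpa using summable_pow_mul_geometric_of_norm_lt_one 1
      (r := r) (by rw [Real.norm_eq_abs, abs_of_nonneg h0]; exact h1)
  exact ⟨∑' k : ℕ, (k : ℝ) * r ^ k, tsum_nonneg fun k => by positivity,
    fun n => hs.sum_le_tsum _ fun k _ => by positivity⟩

/-- the numerical sum -/
lemma sum_bound (d : ℕ) (hd : 3 ≤ d) : ∃ C : ℝ, 0 < C ∧ ∀ n s : ℕ,
    (s : ℝ) ≤ (1 / 2) ^ (d + 1) / 4 * ((n : ℝ) + 1) → (s : ℝ) ^ d ≤ ((n : ℝ) + 1) ^ (d - 2) →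
    ∑ j ∈ Finset.range n, ((((n - j : ℕ) : ℝ) * ((j : ℝ) + 1) / ((n : ℝ) + 1) ^ 2) *
        ((((n : ℝ) + 1) / ((n - j : ℕ) : ℝ)) ^ 2 *
          ((((n - j : ℕ) : ℝ) + s) / (((n : ℝ) + 1) + s)) ^ d) ^ (n - j)) ≤ C / ((n : ℝ) + 1) := by
  set δ : ℝ := (1 / 2) ^ (d + 1) with hδ
  have hδ0 : 0 < δ := by positivity
  have hδ1 : δ ≤ 1 := pow_le_one₀ (by norm_num) (by norm_num)
  set r := Real.exp (-(δ / 4))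
  set K : ℝ := ((2 : ℝ) ^ (d + 1)) ^ (2 ^ (d + 1))
  have hK : 0 ≤ K := by positivity
  obtain ⟨S1, hS1, h1⟩ := geom_bound (1 / 2) (by norm_num) (by norm_num)
  obtain ⟨S2, hS2, h2⟩ := geom_bound r (Real.exp_pos _).le (by
    rw [Real.exp_lt_one_iff]; linarith)
  refine ⟨K * S1 + S2 + 1, by positivity, fun n s hs hsd => ?_⟩
  set N : ℝ := (n : ℝ) + 1 with hN
  have hN0 : 0 < N := by positivity
  have key : ∀ j ∈ Finset.range n, ((((n - j : ℕ) : ℝ) * ((j : ℝ) + 1) / N ^ 2) *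
        ((N / ((n - j : ℕ) : ℝ)) ^ 2 *
          ((((n - j : ℕ) : ℝ) + s) / (N + s)) ^ d) ^ (n - j)) ≤
      (K * (((n - j : ℕ) : ℝ) * (1 / 2) ^ (n - j)) + ((j + 1 : ℕ) : ℝ) * r ^ (j + 1)) / N := by
    intro j hj
    rw [Finset.mem_range] at hj
    have hkl : ((j + 1 : ℕ) : ℝ) + ((n - j : ℕ) : ℝ) = N := by
      rw [Nat.cast_sub hj.le, hN]; push_cast; ring
    have hjk : (j : ℝ) + 1 = ((j + 1 : ℕ) : ℝ) := by push_cast; ring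
    rw [hjk]
    have hk1 : 1 ≤ j + 1 := by omega
    have hl1 : 1 ≤ n - j := by omega
    generalize j + 1 = k at *
    generalize n - j = l at *
    have hk0 : (0 : ℝ) < k := by exact_mod_cast hk1
    have hl0 : (0 : ℝ) < l := by exact_mod_cast hl1
    have hr0 : 0 < r := Real.exp_pos _
    rcases le_total (δ * N) l with h | h
    · have := analytic_large d k l hd s N δ (by positivity) hδ0 hδ1 hk1 hl1 hkl hs h
      calc _ ≤ (l * k / N ^ 2) * r ^ k := by gcongr
        _ = (l / N) * (k * r ^ k / N) := by field_simp
        _ ≤ 1 * (k * r ^ k / N) := by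
          gcongr
          rw [div_le_one hN0]; linarith
        _ ≤ _ := by
          rw [one_mul]
          gcongr
          have : 0 ≤ K * (l * (1 / 2) ^ l) := by positivity
          linarith
    · have := analytic_small d l hd s N (by positivity) hl1 hN0 hsd h
      calc _ ≤ (l * k / N ^ 2) * (K * (1 / 2) ^ l) := by gcongr
        _ = (k / N) * (K * (l * (1 / 2) ^ l) / N) := by field_simp
        _ ≤ 1 * (K * (l * (1 / 2) ^ l) / N) := by
          gcongr
          rw [div_le_one hN0]; linarith
        _ ≤ _ := by
          rw [one_mul]
          gcongr
          have : 0 ≤ k * r ^ k := by positivity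
          linarith
  refine (Finset.sum_le_sum key).trans ?_
  rw [← Finset.sum_div]
  gcongr
  rw [Finset.sum_add_distrib, ← Finset.mul_sum]
  have a1 : ∑ j ∈ Finset.range n, (((n - j : ℕ) : ℝ) * (1 / 2) ^ (n - j)) ≤ S1 := by
    have e := h1 (n + 1)
    rw [← Finset.sum_range_reflect, Finset.sum_range_succ] at e
    simpa using e
  have a2 : ∑ j ∈ Finset.range n, ((j + 1 : ℕ) : ℝ) * r ^ (j + 1) ≤ S2 := by
    have e := h2 (n + 1)
    rw [Finset.sum_range_succ'] at e
    simpa using e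
  have := mul_le_mul_of_nonneg_left a1 hK
  linarith

section comb
variable {n s d : ℕ}

lemma card_sub (n M d : ℕ) :
    Fintype.card {g : Fin n → Finset (Fin M) // ∀ j, (g j).card = d} = (M.choose d) ^ n := by
  rw [Fintype.card_subtype]
  have : (Finset.univ.filter fun g : Fin n → Finset (Fin M) => ∀ j, (g j).card = d) =
      Fintype.piFinset (fun _ => Finset.powersetCard d Finset.univ) := by
    ext g; simp [Finset.mem_powersetCard]
  rw [this, Fintype.card_piFinset]
  simp

/-- the event for a fixed obstruction -/
lemma event_card (A Y : Finset (Fin n)) :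
    (Finset.univ.filter fun ω : {f : Fin n → Finset (Fin n) // ∀ i, (f i).card = 2} ×
                {g : Fin n → Finset (Fin (n + s)) // ∀ j, (g j).card = d} =>
        (∀ i ∈ A, ω.1.val i ⊆ Y) ∧
        ∀ j, j ∉ Y → ω.2.val j ⊆ (A.map (Fin.castAddEmb s))ᶜ).card ≤
      ((Y.card.choose 2) ^ A.card * (n.choose 2) ^ (n - A.card)) *
       (((n + s).choose d) ^ Y.card * ((n + s - A.card).choose d) ^ (n - Y.card)) := by
  set S : Fin n → Finset (Finset (Fin n)) := fun i =>
    if i ∈ A then Finset.powersetCard 2 Y else Finset.powersetCard 2 Finset.univ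
  set T : Fin n → Finset (Finset (Fin (n + s))) := fun j =>
    if j ∈ Y then Finset.powersetCard d Finset.univ
      else Finset.powersetCard d (A.map (Fin.castAddEmb s))ᶜ
  have hcard : (Fintype.piFinset S ×ˢ Fintype.piFinset T).card =
      ((Y.card.choose 2) ^ A.card * (n.choose 2) ^ (n - A.card)) *
       (((n + s).choose d) ^ Y.card * ((n + s - A.card).choose d) ^ (n - Y.card)) := by
    rw [Finset.card_product, Fintype.card_piFinset, Fintype.card_piFinset]
    congr 1
    · simp only [S, apply_ite Finset.card, Finset.card_powersetCard, Finset.card_univ,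
        Fintype.card_fin]
      rw [Finset.prod_ite, Finset.prod_const, Finset.prod_const]
      congr 2
      · simp
      · rw [Finset.filter_not, Finset.card_sdiff_of_subset (Finset.filter_subset _ _)]; simp
    · simp only [T, apply_ite Finset.card, Finset.card_powersetCard, Finset.card_univ,
        Fintype.card_fin, Finset.card_compl, Finset.card_map]
      rw [Finset.prod_ite, Finset.prod_const, Finset.prod_const]
      congr 2
      · simp
      · rw [Finset.filter_not, Finset.card_sdiff_of_subset (Finset.filter_subset _ _)]; simp
  rw [← hcard]
  refine Finset.card_le_card_of_injOn (fun ω => (ω.1.val, ω.2.val)) ?_ ?_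
  · rintro ⟨⟨f, hf⟩, ⟨g, hg⟩⟩ h
    simp only [Finset.coe_filter, Finset.mem_univ, true_and, Set.mem_ofPred_eq] at h
    simp only [Finset.coe_product, Set.mem_prod, Finset.mem_coe, Fintype.mem_piFinset]
    constructor
    · intro i
      by_cases hi : i ∈ A
      · simp [S, hi, Finset.mem_powersetCard, hf, h.1 i hi]
      · simp [S, hi, Finset.mem_powersetCard, hf]
    · intro j
      by_cases hj : j ∈ Y
      · simp [T, hj, Finset.mem_powersetCard, hg]
      · simp only [T, hj, if_false, Finset.mem_powersetCard, hg, and_true]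
        exact h.2 j hj
  · rintro ⟨⟨f, hf⟩, ⟨g, hg⟩⟩ _ ⟨⟨f', hf'⟩, ⟨g', hg'⟩⟩ _ h
    simpa using h

lemma hall_fail (f : Fin n → Finset (Fin n)) (g : Fin n → Finset (Fin (n + s)))
    (h : ¬ ∃ σ : Equiv.Perm (Fin n), ∀ i : Fin n, σ i ∈ f i ∨ Fin.castAdd s i ∈ g (σ i)) :
    ∃ j ∈ Finset.range n, ∃ A ∈ Finset.powersetCard (j + 1) (Finset.univ : Finset (Fin n)),
      ∃ Y ∈ Finset.powersetCard j (Finset.univ : Finset (Fin n)),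
        (∀ i ∈ A, f i ⊆ Y) ∧ ∀ j, j ∉ Y → g j ⊆ (A.map (Fin.castAddEmb s))ᶜ := by
  set t : Fin n → Finset (Fin n) := fun i =>
    Finset.univ.filter fun j => j ∈ f i ∨ Fin.castAdd s i ∈ g j with ht
  have h1 : ¬ ∀ A : Finset (Fin n), A.card ≤ (A.biUnion t).card := by
    intro hA
    obtain ⟨φ, hφ, hφt⟩ := (Finset.all_card_le_biUnion_card_iff_exists_injective t).1 hA
    refine h ⟨Equiv.ofBijective φ (Finite.injective_iff_bijective.1 hφ), fun i => ?_⟩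
    simpa [ht] using hφt i
  push Not at h1
  obtain ⟨A, hA⟩ := h1
  have hAn : A.card ≤ n := by simpa using Finset.card_le_univ A
  obtain ⟨Y, hY, hYc⟩ := Finset.exists_superset_card_eq (s := A.biUnion t) (n := A.card - 1)
    (by omega) (by simp; omega)
  refine ⟨A.card - 1, by simp; omega, A, by simp; omega, Y, by simpa using hYc, ?_, ?_⟩
  · intro i hi j hj
    exact hY (Finset.mem_biUnion.2 ⟨i, hi, by simp [ht, hj]⟩)
  · intro j hj x hx
    rw [Finset.mem_compl, Finset.mem_map]
    rintro ⟨i, hi, rfl⟩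
    exact hj (hY (Finset.mem_biUnion.2 ⟨i, hi, by
      simp only [ht, Finset.mem_filter, Finset.mem_univ, true_and]; exact Or.inr hx⟩))

lemma bad_card :
    (Finset.univ.filter fun ω : {f : Fin n → Finset (Fin n) // ∀ i, (f i).card = 2} ×
                {g : Fin n → Finset (Fin (n + s)) // ∀ j, (g j).card = d} =>
        ¬ ∃ σ : Equiv.Perm (Fin n), ∀ i : Fin n,
              σ i ∈ ω.1.val i ∨ Fin.castAdd s i ∈ ω.2.val (σ i)).card ≤
      ∑ j ∈ Finset.range n, n.choose (j + 1) * n.choose j *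
      (((j.choose 2) ^ (j + 1) * (n.choose 2) ^ (n - (j + 1))) *
       (((n + s).choose d) ^ j * ((n + s - (j + 1)).choose d) ^ (n - j))) := by
  refine (Finset.card_le_card (t := (Finset.range n).biUnion fun j =>
    (Finset.powersetCard (j + 1) (Finset.univ : Finset (Fin n))).biUnion fun A =>
    (Finset.powersetCard j (Finset.univ : Finset (Fin n))).biUnion fun Y =>
    Finset.univ.filter fun ω : {f : Fin n → Finset (Fin n) // ∀ i, (f i).card = 2} ×
                {g : Fin n → Finset (Fin (n + s)) // ∀ j, (g j).card = d} =>
        (∀ i ∈ A, ω.1.val i ⊆ Y) ∧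
        ∀ j, j ∉ Y → ω.2.val j ⊆ (A.map (Fin.castAddEmb s))ᶜ) ?_).trans ?_
  · intro ω hω
    rw [Finset.mem_filter] at hω
    obtain ⟨j, hj, A, hA, Y, hY, h⟩ := hall_fail _ _ hω.2
    simp only [Finset.mem_biUnion]
    exact ⟨j, hj, A, hA, Y, hY, by simpa using h⟩
  · refine Finset.card_biUnion_le.trans (Finset.sum_le_sum fun j _ => ?_)
    have hc : ∀ r, (Finset.powersetCard r (Finset.univ : Finset (Fin n))).card = n.choose r := by
      intro r; simp
    rw [mul_assoc]
    refine (Finset.card_biUnion_le_card_mul _ _ _ fun A hA => ?_).trans_eq (by rw [hc])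
    refine (Finset.card_biUnion_le_card_mul _ _ _ fun Y hY => ?_).trans_eq (by rw [hc])
    refine (event_card A Y).trans_eq ?_
    rw [(Finset.mem_powersetCard.1 hA).2, (Finset.mem_powersetCard.1 hY).2]

end comb

/-- the (2, 2/(1−α))-cross code with s = O(n^α) stragglers.  Let α ∈ (0,1)
with d₂ = 2/(1−α) an integer.  There are C > 0 and N such that for all n ≥ N and
0 ≤ s ≤ n^α (m = n + s): if each left vertex i of an n+n bipartite graph picks a uniform
2-subset L_i of the n right vertices and each right vertex j picks a uniform d₂-subset
R_j of the m workers, with an edge i–j iff j ∈ L_i or i ∈ R_j (left vertices identified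
with the first n of the m workers), then the graph has a perfect matching with probability
at least 1 − C/n (stated by counting). -/
theorem stmt_18 (α : ℝ) (hα : α ∈ Set.Ioo (0 : ℝ) 1) (d₂ : ℕ)
    (hd₂ : (d₂ : ℝ) = 2 / (1 - α)) :
    ∃ C : ℝ, 0 < C ∧ ∃ N : ℕ, ∀ n : ℕ, N ≤ n → ∀ s : ℕ,
      (s : ℝ) ≤ (n : ℝ) ^ α →
      (1 - C / n) *
          (Fintype.card
            ({f : Fin n → Finset (Fin n) // ∀ i, (f i).card = 2} ×
              {g : Fin n → Finset (Fin (n + s)) // ∀ j, (g j).card = d₂}) : ℝ) ≤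
        ((Finset.univ.filter fun ω :
              {f : Fin n → Finset (Fin n) // ∀ i, (f i).card = 2} ×
                {g : Fin n → Finset (Fin (n + s)) // ∀ j, (g j).card = d₂} =>
            ∃ σ : Equiv.Perm (Fin n), ∀ i : Fin n,
              σ i ∈ ω.1.val i ∨ Fin.castAdd s i ∈ ω.2.val (σ i)).card : ℝ) := by
  obtain ⟨hα0, hα1⟩ := hα
  have h1α : 0 < 1 - α := by linarith
  have hdα : (d₂ : ℝ) * (1 - α) = 2 := by rw [hd₂]; field_simp
  have hd3 : 3 ≤ d₂ := by
    have : (2 : ℝ) < d₂ := by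
      rw [hd₂, lt_div_iff₀ h1α]; linarith
    exact_mod_cast this
  obtain ⟨C, hC, hsum⟩ := sum_bound d₂ hd3
  set ε : ℝ := (1 / 2) ^ (d₂ + 1) / 4 with hε
  have hε0 : 0 < ε := by positivity
  have hlim : ∀ᶠ n : ℕ in Filter.atTop, (n : ℝ) ^ (-(1 - α)) < ε :=
    ((tendsto_rpow_neg_atTop h1α).comp tendsto_natCast_atTop_atTop).eventually_lt_const hε0
  obtain ⟨N₀, hN₀⟩ := Filter.eventually_atTop.1 hlim
  refine ⟨C, hC, N₀ + 1, fun n hn s hs => ?_⟩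
  have hn0 : (0 : ℝ) < n := by
    have : 0 < n := by omega
    exact_mod_cast this
  have hs1 : (s : ℝ) ≤ ε * ((n : ℝ) + 1) := by
    have h := hN₀ n (by omega)
    have e : (n : ℝ) ^ α = (n : ℝ) ^ (-(1 - α)) * n := by
      rw [← Real.rpow_add_one hn0.ne']; congr 1; ring
    rw [e] at hs
    nlinarith
  have hs2 : (s : ℝ) ^ d₂ ≤ ((n : ℝ) + 1) ^ (d₂ - 2) := by
    calc (s : ℝ) ^ d₂ ≤ ((n : ℝ) ^ α) ^ d₂ := by gcongr
      _ = (n : ℝ) ^ (d₂ - 2) := by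
        rw [← Real.rpow_natCast, ← Real.rpow_mul hn0.le, ← Real.rpow_natCast]
        congr 1
        rw [Nat.cast_sub (by omega)]; push_cast; linarith
      _ ≤ _ := by gcongr; linarith
  have hS := hsum n s hs1 hs2
  have hbad := bad_card (n := n) (s := s) (d := d₂)
  have hbadR := (Nat.cast_le (α := ℝ)).2 hbad
  rw [Nat.cast_sum] at hbadR
  have hsplit := Finset.card_filter_add_card_filter_not (s := (Finset.univ : Finset
      ({f : Fin n → Finset (Fin n) // ∀ i, (f i).card = 2} ×
        {g : Fin n → Finset (Fin (n + s)) // ∀ j, (g j).card = d₂})))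
    (fun ω => ∃ σ : Equiv.Perm (Fin n), ∀ i : Fin n,
              σ i ∈ ω.1.val i ∨ Fin.castAdd s i ∈ ω.2.val (σ i))
  rw [Finset.card_univ] at hsplit
  have hsplitR := congrArg (Nat.cast (R := ℝ)) hsplit
  rw [Nat.cast_add] at hsplitR
  have hcard : (Fintype.card
            ({f : Fin n → Finset (Fin n) // ∀ i, (f i).card = 2} ×
              {g : Fin n → Finset (Fin (n + s)) // ∀ j, (g j).card = d₂}) : ℝ) =
      (n.choose 2 : ℝ) ^ n * ((n + s).choose d₂ : ℝ) ^ n := by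
    rw [Fintype.card_prod, card_sub, card_sub]; push_cast; ring
  have hfin : ((Finset.univ.filter fun ω : {f : Fin n → Finset (Fin n) // ∀ i, (f i).card = 2} ×
                {g : Fin n → Finset (Fin (n + s)) // ∀ j, (g j).card = d₂} =>
        ¬ ∃ σ : Equiv.Perm (Fin n), ∀ i : Fin n,
              σ i ∈ ω.1.val i ∨ Fin.castAdd s i ∈ ω.2.val (σ i)).card : ℝ) ≤
      C / n * ((n.choose 2 : ℝ) ^ n * ((n + s).choose d₂ : ℝ) ^ n) := by
    refine hbadR.trans ?_
    have hX := mul_le_mul_of_nonneg_right hS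
      (by positivity : (0 : ℝ) ≤ (n.choose 2 : ℝ) ^ n * ((n + s).choose d₂ : ℝ) ^ n)
    rw [Finset.sum_mul] at hX
    refine (Finset.sum_le_sum (fun j hj => ?_)).trans (hX.trans ?_)
    · push_cast
      exact term_bound n s d₂ j (Finset.mem_range.1 hj)
    gcongr
    linarith
  rw [hcard] at hsplitR ⊢
  linarith
end
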